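/- arXiv:1412.6657 — 3 statements merged into one kernel-verified Lean document; each statement's English description precedes it below -/
import Mathlib

section
/- Let M be a countable totally categorical structure which lies in the algebraic closure of some 0-definable modular strictly minimal set D in M^eq. Then Aut(M), with the topology of pointwise convergence, is an amenable group. -/
open FirstOrder FirstOrder.Language CategoryTheory Set

universe u v

namespace Paper


variable {L : FirstOrder.Language.{u, v}}

/-- `A` is an amalgamation base for the class `K`: any two extensions of `A` in `K`
have a common extension in `K` amalgamating the embeddings over `A`. -/
def IsAmalgamationBase (K : Set (Bundled.{0} L.Structure)) (A : Bundled.{0} L.Structure) : Prop :=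
  A ∈ K ∧ ∀ (B C : Bundled.{0} L.Structure) (f : A ↪[L] B) (g : A ↪[L] C),
    B ∈ K → C ∈ K → ∃ (D : Bundled.{0} L.Structure) (f' : B ↪[L] D) (g' : C ↪[L] D),
      D ∈ K ∧ f'.comp f = g'.comp g

/-- Truss' condition: every element of `K` extends to an amalgamation base. -/
def TrussCondition (K : Set (Bundled.{0} L.Structure)) : Prop :=
  ∀ A ∈ K, ∃ B : Bundled.{0} L.Structure, IsAmalgamationBase K B ∧ Nonempty (A ↪[L] B)

/-- `C` is a cofinal subclass of `K`. -/
def IsCofinalIn (C K : Set (Bundled.{0} L.Structure)) : Prop :=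
  C ⊆ K ∧ ∀ A ∈ K, ∃ B ∈ C, Nonempty (A ↪[L] B)

/-- The weak amalgamation property. -/
def WeakAmalgamation (K : Set (Bundled.{0} L.Structure)) : Prop :=
  ∀ A ∈ K, ∃ (A' : Bundled.{0} L.Structure) (i : A ↪[L] A'), A' ∈ K ∧
    ∀ (B₁ B₂ : Bundled.{0} L.Structure) (f₁ : A' ↪[L] B₁) (f₂ : A' ↪[L] B₂),
      B₁ ∈ K → B₂ ∈ K →
      ∃ (D : Bundled.{0} L.Structure) (g₁ : B₁ ↪[L] D) (g₂ : B₂ ↪[L] D),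
        D ∈ K ∧ (g₁.comp f₁).comp i = (g₂.comp f₂).comp i

/-- The set of copies of `A` inside a structure `C`: substructures of `C` isomorphic to `A`. -/
def copies (A : Bundled.{0} L.Structure) (C : Type) [L.Structure C] :
    Set (L.Substructure C) :=
  {S | Nonempty (A ≃[L] S)}

/-- The Ramsey property for a class of finite structures, phrased with copies:
for every `k` and every pair `A ≤ B` in the class there is `C₀` in the class such that
every `k`-coloring of the copies of `A` in `C₀` is monochromatic on the copies of `A`
lying inside some copy of `B` in `C₀`. -/
def RamseyProperty (C : Set (Bundled.{0} L.Structure)) : Prop :=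
  ∀ (k : ℕ), ∀ A ∈ C, ∀ B ∈ C, Nonempty (A ↪[L] B) →
    ∃ C₀ ∈ C, ∀ ξ : L.Substructure C₀ → Fin (k + 1),
      ∃ B' ∈ copies B C₀, ∀ S₁ ∈ copies A C₀, ∀ S₂ ∈ copies A C₀,
        S₁ ≤ B' → S₂ ≤ B' → ξ S₁ = ξ S₂

/-- `k` is a bound for the embedding Ramsey degree of `A` in the class `K`. -/
def EmbRamseyDegBound (K : Set (Bundled.{0} L.Structure)) (A : Bundled.{0} L.Structure)
    (k : ℕ) : Prop :=
  ∀ (r : ℕ), ∀ B ∈ K, Nonempty (A ↪[L] B) →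
    ∃ C ∈ K, ∀ ξ : (A ↪[L] C) → Fin (r + 1),
      ∃ h : B ↪[L] C, (Set.range fun e : A ↪[L] B => ξ (h.comp e)).ncard ≤ k

/-- The embedding Ramsey degree of `A` in `K`, as an extended natural number
(`⊤` if no finite bound exists). -/
noncomputable def embRamseyDegree (K : Set (Bundled.{0} L.Structure))
    (A : Bundled.{0} L.Structure) : ℕ∞ :=
  sInf {n : ℕ∞ | ∃ k : ℕ, n = k ∧ EmbRamseyDegBound K A k}

/-- `k` is a bound for the (copy) Ramsey degree of `A` in the class `K`. -/
def RamseyDegBound (K : Set (Bundled.{0} L.Structure)) (A : Bundled.{0} L.Structure)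
    (k : ℕ) : Prop :=
  ∀ (r : ℕ), ∀ B ∈ K, Nonempty (A ↪[L] B) →
    ∃ C ∈ K, ∀ ξ : L.Substructure C → Fin (r + 1),
      ∃ B' ∈ copies B (C : Type), (ξ '' {S | S ∈ copies A (C : Type) ∧ S ≤ B'}).ncard ≤ k

/-- `A` has finite (copy) Ramsey degree in `K`. -/
def HasFinRamseyDeg (K : Set (Bundled.{0} L.Structure)) (A : Bundled.{0} L.Structure) : Prop :=
  ∃ k : ℕ, RamseyDegBound K A k

variable {L : FirstOrder.Language.{u, v}}

/-- The space of candidate `L`-structures on `ω`, for a relational language: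
a point records, for each relation symbol, which tuples satisfy it.  It carries
the product topology (with `Bool` discrete), which is the standard logic topology. -/
abbrev StructureSpace (L : FirstOrder.Language.{u, v}) : Type v :=
  ∀ n : ℕ, L.Relations n → (Fin n → ℕ) → Bool

/-- The `L`-structure on `ℕ` coded by a point of the structure space. -/
def pointStructure [L.IsRelational] (x : StructureSpace L) : L.Structure ℕ where
  funMap := fun f _ => isEmptyElim f
  RelMap := fun {n} R t => x n R t = true

/-- The point of the structure space coding a given `L`-structure on `ℕ`. -/
noncomputable def ofStructure (N : L.Structure ℕ) : StructureSpace L :=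
  fun n R t => @decide (@Structure.RelMap L ℕ N n R t) (Classical.propDecidable _)

/-- The logic action of `S∞ = Perm ℕ` on the space of structures. -/
def permSMul (g : Equiv.Perm ℕ) (x : StructureSpace L) : StructureSpace L :=
  fun n R t => x n R fun i => g.symm (t i)

@[simp] theorem permSMul_one (x : StructureSpace L) : permSMul 1 x = x := rfl

theorem permSMul_mul (g h : Equiv.Perm ℕ) (x : StructureSpace L) :
    permSMul (g * h) x = permSMul g (permSMul h x) := rfl

/-- The automorphism group of (the structure coded by) `x`, as a subgroup of `S∞`. -/
def autGroup (x : StructureSpace L) : Subgroup (Equiv.Perm ℕ) where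
  carrier := {g | permSMul g x = x}
  one_mem' := permSMul_one x
  mul_mem' := by
    intro a b ha hb
    show permSMul (a * b) x = x
    rw [permSMul_mul, hb, ha]
  inv_mem' := by
    intro a ha
    show permSMul a⁻¹ x = x
    conv_lhs => rw [← ha]
    rw [← permSMul_mul, inv_mul_cancel, permSMul_one]

/-- The topology of pointwise convergence on `S∞` (and hence, by restriction, on
automorphism groups of structures with universe `ℕ`). -/
instance : TopologicalSpace (Equiv.Perm ℕ) :=
  TopologicalSpace.induced
    (fun g => ((g : ℕ → ℕ), ((g⁻¹ : Equiv.Perm ℕ) : ℕ → ℕ))) inferInstance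

/-- The age of the structure coded by a point of the structure space. -/
def agePoint [L.IsRelational] (x : StructureSpace L) : Set (Bundled.{0} L.Structure) :=
  @FirstOrder.Language.age L ℕ (pointStructure x)

/-- The subspace of the structure space consisting of structures whose age is contained
in `K`. -/
def spaceOf [L.IsRelational] (K : Set (Bundled.{0} L.Structure)) : Set (StructureSpace L) :=
  {x | agePoint x ⊆ K}

/-- `x` is a generic point for `K` : it lies in the space of structures with age `⊆ K`,
and its `S∞`-orbit is comeagre there. -/
def IsGenericPoint [L.IsRelational] (K : Set (Bundled.{0} L.Structure))
    (x : StructureSpace L) : Prop :=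
  x ∈ spaceOf K ∧
    {y : ↥(spaceOf K) | ∃ g : Equiv.Perm ℕ, (y : StructureSpace L) = permSMul g x} ∈
      residual ↥(spaceOf K)

/-- A topological group is extremely amenable if every continuous action on a nonempty
compact Hausdorff space has a fixed point. -/
def ExtremelyAmenable (G : Type*) [Group G] [TopologicalSpace G] : Prop :=
  ∀ (X : Type) [TopologicalSpace X] [CompactSpace X] [T2Space X] [Nonempty X]
    [MulAction G X], ContinuousSMul G X → ∃ x : X, ∀ g : G, g • x = x

/-- A topological group is amenable if every continuous action on a nonempty compact
Hausdorff space supports an invariant Borel probability measure. -/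
def AmenableGroup (G : Type*) [Group G] [TopologicalSpace G] : Prop :=
  ∀ (X : Type) [TopologicalSpace X] [CompactSpace X] [T2Space X] [Nonempty X]
    [MulAction G X], ContinuousSMul G X →
    letI : MeasurableSpace X := borel X
    ∃ μ : MeasureTheory.Measure X, MeasureTheory.IsProbabilityMeasure μ ∧
      ∀ g : G, MeasureTheory.Measure.map (fun p => g • p) μ = μ

/-- Uniform local finiteness: substructures generated by `n` elements have size
bounded by a function of `n`. -/
def IsULF (L : FirstOrder.Language.{u, v}) (N : Type*) [L.Structure N] : Prop :=
  ∃ f : ℕ → ℕ, ∀ s : Finset N, Nat.card (Substructure.closure L (s : Set N)) ≤ f s.card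

/-- `K` is (the universal class given by) the age of a countable uniformly locally
finite structure. -/
def IsAgeOfCountableULF (K : Set (Bundled.{0} L.Structure)) : Prop :=
  ∃ N : Bundled.{0} L.Structure, Countable N ∧ IsULF L N ∧ K = L.age N

variable {L : FirstOrder.Language.{u, v}}


/-- `M` is ω-categorical : its complete theory has, up to isomorphism, a unique
countable model. -/
def OmegaCategorical (L : FirstOrder.Language.{0, 0}) (M : Type) [L.Structure M] : Prop :=
  Cardinal.Categorical Cardinal.aleph0.{0} (L.completeTheory M)

/-- `M` is totally categorical : its complete theory is categorical in every infinite
cardinality. -/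
def TotallyCategorical (L : FirstOrder.Language.{0, 0}) (M : Type) [L.Structure M] : Prop :=
  ∀ κ : Cardinal.{0}, Cardinal.aleph0 ≤ κ → Cardinal.Categorical.{0,0,0} κ (L.completeTheory M)

/-- A formula in one free variable with parameter tuple, coded syntactically. -/
abbrev ParamFormula (L : FirstOrder.Language.{0, 0}) : Type :=
  Σ k : ℕ, L.Formula (Fin k ⊕ Fin 1) × (Fin k → ℕ)

/-- Realization of a parametrized formula at a point, in the structure `M` on `ℕ`. -/
def ParamFormula.RealizeAt (L : FirstOrder.Language.{0, 0}) (M : L.Structure ℕ)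
    (q : ParamFormula L) (b : ℕ) : Prop :=
  @Formula.Realize L ℕ M _ q.2.1 (Sum.elim q.2.2 fun _ => b)

/-- `p` is a complete 1-type over the parameter set `A` of the structure `M` on `ℕ` :
all parameters come from `A`, `p` is finitely satisfiable in `M` and complete. -/
def IsCompleteTypeOver (L : FirstOrder.Language.{0, 0}) (M : L.Structure ℕ) (A : Set ℕ)
    (p : Set (ParamFormula L)) : Prop :=
  (∀ q ∈ p, ∀ i, q.2.2 i ∈ A) ∧
    (∀ s : Finset (ParamFormula L), ↑s ⊆ p →
      ∃ b : ℕ, ∀ q ∈ s, ParamFormula.RealizeAt L M q b) ∧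
    ∀ (k : ℕ) (φ : L.Formula (Fin k ⊕ Fin 1)) (a : Fin k → ℕ), (∀ i, a i ∈ A) →
      (⟨k, (φ, a)⟩ : ParamFormula L) ∈ p ∨ (⟨k, (φ.not, a)⟩ : ParamFormula L) ∈ p

/-- `M` is ω-stable : over every countable parameter set there are only countably many
complete 1-types. -/
def OmegaStable (L : FirstOrder.Language.{0, 0}) (M : L.Structure ℕ) : Prop :=
  ∀ A : Set ℕ, A.Countable → {p | IsCompleteTypeOver L M A p}.Countable

/-- The structure on `ℕ` in the language expanded by the new relation symbols of `L'`,
obtained by adjoining to `M` the interpretations coded by `e`. -/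
def expStructure (L' : FirstOrder.Language.{0, 0}) [L'.IsRelational]
    (M : L.Structure ℕ) (e : StructureSpace L') : (L.sum L').Structure ℕ where
  funMap := fun {n} f t => Sum.casesOn f (fun f => @Structure.funMap L ℕ M n f t)
    (fun f => isEmptyElim f)
  RelMap := fun {n} R t => Sum.casesOn R (fun R => @Structure.RelMap L ℕ M n R t)
    (fun R => e n R t = true)

/-- The expansion `e` of `M` is precompact : every finite structure in the age of `M`
has only finitely many expansions in the age of the expanded structure. -/
def PrecompactExpansion (L' : FirstOrder.Language.{0, 0}) [L'.IsRelational]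
    (M : L.Structure ℕ) (e : StructureSpace L') : Prop :=
  ∀ A : Bundled.{0} L.Structure, A ∈ @FirstOrder.Language.age L ℕ M → Finite A →
    {S : (L.sum L').Structure A.α |
      @FirstOrder.Language.LHom.reduct L (L.sum L') LHom.sumInl A.α S = A.str ∧
        (Bundled.mk A.α S) ∈
          @FirstOrder.Language.age (L.sum L') ℕ (expStructure L' M e)}.Finite

/-- An (abstract) flow of a topological group `G` on a topological space `X`. -/
structure FlowOn (G : Type*) [Group G] [TopologicalSpace G] (X : Type*)
    [TopologicalSpace X] where
  act : G → X → X
  continuous_act : Continuous fun p : G × X => act p.1 p.2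
  act_one : ∀ x, act 1 x = x
  act_mul : ∀ g h x, act (g * h) x = act g (act h x)

variable {G : Type*} [Group G] [TopologicalSpace G] {X : Type*} [TopologicalSpace X]

/-- A flow is minimal if its phase space is a nonempty compact space in which
every orbit is dense. -/
def FlowOn.IsMinimal (F : FlowOn G X) : Prop :=
  Nonempty X ∧ CompactSpace X ∧ ∀ x : X, Dense (Set.range fun g : G => F.act g x)

/-- A flow is a universal minimal flow if it is minimal and admits a continuous
equivariant map to every nonempty compact flow. -/
def FlowOn.IsUniversalMinimal (F : FlowOn G X) : Prop :=
  F.IsMinimal ∧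
    ∀ (Y : Type) [TopologicalSpace Y] [CompactSpace Y] [Nonempty Y] (F' : FlowOn G Y),
      ∃ f : X → Y, Continuous f ∧ ∀ g y, f (F.act g y) = F'.act g (f y)

/-- An imaginary sort of `W` : a `0`-definable equivalence relation `E` on `n`-tuples,
whose classes are the elements of the sort (a sort of `W^eq`). -/
structure ImagSort (L : FirstOrder.Language.{0, 0}) (W : Type) [L.Structure W] where
  n : ℕ
  rel : (Fin n → W) → (Fin n → W) → Prop
  equiv : Equivalence rel
  defble : (∅ : Set W).Definable L
    {v : (Fin n ⊕ Fin n) → W | rel (fun i => v (Sum.inl i)) (fun i => v (Sum.inr i))}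

variable {L : FirstOrder.Language.{0, 0}} {W : Type} [L.Structure W]

/-- A set of tuples is invariant if it is a union of classes of the sort. -/
def ImagSort.Invariant (S : ImagSort L W) (X : Set (Fin S.n → W)) : Prop :=
  ∀ x y, S.rel x y → (x ∈ X ↔ y ∈ X)

/-- The set of classes represented by a set of tuples. -/
def ImagSort.classesOf (S : ImagSort L W) (X : Set (Fin S.n → W)) : Set (Quot S.rel) :=
  Quot.mk S.rel '' X

/-- Realization of a formula whose variables are `k` parameter tuples of length `n`
together with variables `β`. -/
def realizeWithParams {k n : ℕ} {β : Type}
    (φ : L.Formula ((Fin k × Fin n) ⊕ β)) (p : Fin k → Fin n → W) (v : β → W) : Prop :=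
  φ.Realize (Sum.elim (fun q => p q.1 q.2) v)

/-- The set of real elements of `W` algebraic (in `W^eq`) over the set of imaginary
elements coded by `P`. -/
def realAclOverIm (S : ImagSort L W) (P : Set (Fin S.n → W)) : Set W :=
  {b | ∃ (k : ℕ) (φ : L.Formula ((Fin k × Fin S.n) ⊕ Fin 1)) (p : Fin k → Fin S.n → W),
    (∀ j, p j ∈ P) ∧
    (∀ p' : Fin k → Fin S.n → W, (∀ j, S.rel (p j) (p' j)) → ∀ c : W,
      realizeWithParams φ p (fun _ => c) ↔ realizeWithParams φ p' (fun _ => c)) ∧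
    realizeWithParams φ p (fun _ => b) ∧
    {c : W | realizeWithParams φ p (fun _ => c)}.Finite}

/-- The set of imaginary elements (tuples, up to the sort's equivalence relation)
algebraic in `W^eq` over the set of imaginary elements coded by `P`. -/
def imAclOverIm (S : ImagSort L W) (P : Set (Fin S.n → W)) : Set (Fin S.n → W) :=
  {x | ∃ (k : ℕ) (φ : L.Formula ((Fin k × Fin S.n) ⊕ Fin S.n)) (p : Fin k → Fin S.n → W),
    (∀ j, p j ∈ P) ∧
    (∀ p' : Fin k → Fin S.n → W, (∀ j, S.rel (p j) (p' j)) → ∀ y,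
      realizeWithParams φ p y ↔ realizeWithParams φ p' y) ∧
    (∀ y z, S.rel y z → (realizeWithParams φ p y ↔ realizeWithParams φ p z)) ∧
    realizeWithParams φ p x ∧
    (S.classesOf {y | realizeWithParams φ p y}).Finite}

/-- A `0`-definable subset `D` of an imaginary sort is strongly minimal if it has
infinitely many classes and every definable invariant subset is finite or cofinite
on classes. -/
def ImStronglyMinimal (S : ImagSort L W) (D : Set (Fin S.n → W)) : Prop :=
  (S.classesOf D).Infinite ∧
    ∀ s : Set (Fin S.n → W), S.Invariant s → (Set.univ : Set W).Definable L s →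
      (S.classesOf (s ∩ D)).Finite ∨ (S.classesOf (D \ s)).Finite

/-- A strictly minimal subset of an imaginary sort : `0`-definable, invariant, strongly
minimal, with `Aut(W)` acting transitively on its classes. -/
def ImStrictlyMinimal (S : ImagSort L W) (D : Set (Fin S.n → W)) : Prop :=
  (∅ : Set W).Definable L D ∧ S.Invariant D ∧ ImStronglyMinimal S D ∧
    ∀ x ∈ D, ∀ y ∈ D, ∃ e : W ≃[L] W, S.rel (fun i => e (x i)) y

/-- A closed subset of `D` in the pregeometry given by algebraic closure in `W^eq`. -/
def ImAclClosedIn (S : ImagSort L W) (D X : Set (Fin S.n → W)) : Prop :=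
  X ⊆ D ∧ S.Invariant X ∧ imAclOverIm S X ∩ D = X

/-- Modularity of the pregeometry on a subset `D` of an imaginary sort, phrased as the
modular law for the lattice of closed subsets. -/
def ImModularOn (S : ImagSort L W) (D : Set (Fin S.n → W)) : Prop :=
  ∀ X Y Z, ImAclClosedIn S D X → ImAclClosedIn S D Y → ImAclClosedIn S D Z → X ⊆ Z →
    imAclOverIm S (X ∪ (Y ∩ Z)) ∩ D = (imAclOverIm S (X ∪ Y) ∩ D) ∩ Z

/-- Points with finite orbit under the pointwise stabilizer of `A`. -/
def gcl (G : Type) {Ω : Type} [Group G] [MulAction G Ω] (A : Set Ω) : Set Ω :=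
  {x | {y | ∃ g : G, (∀ a ∈ A, g • a = a) ∧ g • x = y}.Finite}

theorem subset_gcl {G Ω : Type} [Group G] [MulAction G Ω] (A : Set Ω) : A ⊆ gcl G A := by
  intro x hx
  refine (Set.finite_singleton x).subset ?_
  rintro y ⟨g, hg, rfl⟩
  exact hg x hx

theorem gcl_mono {G Ω : Type} [Group G] [MulAction G Ω] {A B : Set Ω} (h : A ⊆ B) :
    gcl G A ⊆ gcl G B := by
  intro x hx
  refine Set.Finite.subset hx ?_
  rintro y ⟨g, hg, rfl⟩
  exact ⟨g, fun a ha => hg a (h ha), rfl⟩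

theorem gcl_idem {G Ω : Type} [Group G] [MulAction G Ω] {A B : Set Ω} (hB : B.Finite)
    (h : B ⊆ gcl G A) : gcl G B ⊆ gcl G A := by
  intro x hx
  have := hB.to_subtype
  set T : Set (B → Ω) := {f | ∃ g : G, (∀ a ∈ A, g • a = a) ∧ f = fun b : B => g • (b : Ω)} with hT
  have hTf : T.Finite := by
    refine (Set.Finite.pi' (t := fun b : B => {y | ∃ g : G, (∀ a ∈ A, g • a = a) ∧ g • (b : Ω) = y})
      (fun b => h b.2)).subset ?_
    rintro f ⟨g, hg, rfl⟩ b
    exact ⟨g, hg, rfl⟩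
  choose! c hc hc' using (fun (f : B → Ω) (hf : f ∈ T) => hf)
  have hx' : {y | ∃ g : G, (∀ a ∈ B, g • a = a) ∧ g • x = y}.Finite := hx
  refine (hTf.biUnion (t := fun f => (fun y => c f • y) ''
    {y | ∃ g : G, (∀ a ∈ B, g • a = a) ∧ g • x = y}) (fun f _ => hx'.image _)).subset ?_
  rintro y ⟨g, hg, rfl⟩
  have hf : (fun b : B => g • (b : Ω)) ∈ T := ⟨g, hg, rfl⟩
  refine Set.mem_biUnion hf ⟨(c (fun b : B => g • (b : Ω)))⁻¹ • g • x,
    ⟨(c (fun b : B => g • (b : Ω)))⁻¹ * g, ?_, ?_⟩, ?_⟩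
  · intro a ha
    have := congrFun (hc' _ hf) ⟨a, ha⟩
    rw [mul_smul, inv_smul_eq_iff]
    exact this
  · rw [mul_smul]
  · simp

theorem gcl_smul {G Ω : Type} [Group G] [MulAction G Ω] {A : Set Ω} (g : G) {x : Ω}
    (hx : x ∈ gcl G A) : g • x ∈ gcl G ((fun y => g • y) '' A) := by
  have hx' : {y | ∃ g : G, (∀ a ∈ A, g • a = a) ∧ g • x = y}.Finite := hx
  refine (hx'.image (fun y => g • y)).subset ?_
  rintro y ⟨k, hk, rfl⟩
  refine ⟨g⁻¹ • k • g • x, ⟨g⁻¹ * k * g, ?_, by simp [mul_smul]⟩, by simp⟩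
  intro a ha
  have := hk (g • a) ⟨a, ha, rfl⟩
  simp [mul_smul, this]

theorem gcl_smul' {G Ω : Type} [Group G] [MulAction G Ω] {A : Set Ω} (g : G) {x : Ω}
    (hx : x ∈ gcl G ((fun y => g • y) '' A)) : g⁻¹ • x ∈ gcl G A := by
  have := gcl_smul g⁻¹ hx
  simpa [Set.image_image] using this

theorem homog {G Ω : Type} [Group G] [MulAction G Ω]
    (hfin : ∀ A : Set Ω, A.Finite → (gcl G A).Finite) (Q : Set Ω)
    (hQi : ∀ (g : G) (x : Ω), x ∈ Q → g • x ∈ Q)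
    (hQ : ∀ A : Set Ω, A.Finite → ∀ x ∈ Q, ∀ y ∈ Q, x ∉ gcl G A → y ∉ gcl G A →
      ∃ g : G, (∀ a ∈ A, g • a = a) ∧ g • x = y)
    (X : Set Ω) (hX : X.Finite) (hXQ : X ⊆ Q) :
    ∀ (n : ℕ) (B : Set Ω) (g : G), ((gcl G X ∩ Q) \ B).ncard = n → B ⊆ gcl G X →
      (∀ b ∈ B, g • b ∈ gcl G X) →
      ∃ h : G, (∀ y ∈ gcl G X, h • y ∈ gcl G X) ∧ ∀ b ∈ B, h • b = g • b := by
  intro n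
  have hYf := hfin X hX
  have hYc : ∀ B, B ⊆ gcl G X → gcl G B ⊆ gcl G X := fun B hB => gcl_idem (hYf.subset hB) hB
  induction n using Nat.strong_induction_on with
  | _ n ih =>
  intro B g hn hB hgB
  have hBf := hYf.subset hB
  have hgB' : (fun y => g • y) '' B ⊆ gcl G X := by
    rintro _ ⟨b, hb, rfl⟩; exact hgB b hb
  by_cases hc : gcl G X ∩ Q ⊆ gcl G B
  · refine ⟨g, ?_, fun _ _ => rfl⟩
    intro y hy
    have h1 : y ∈ gcl G (gcl G X ∩ Q) := gcl_mono (Set.subset_inter (subset_gcl X) hXQ) hy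
    refine hYc _ ?_ (gcl_smul g h1)
    rintro _ ⟨x, hx, rfl⟩
    exact hYc _ hgB' (gcl_smul g (hc hx))
  · obtain ⟨x, hx, hxB⟩ := Set.not_subset.1 hc
    have hc2 : ¬ gcl G X ∩ Q ⊆ gcl G ((fun y => g • y) '' B) := by
      intro hcon
      have h1 : gcl G X ⊆ gcl G ((fun y => g • y) '' B) :=
        gcl_idem hX ((Set.subset_inter (subset_gcl X) hXQ).trans hcon)
      have h2 : (fun y => g⁻¹ • y) '' gcl G X ⊆ gcl G B := by
        rintro _ ⟨y, hy, rfl⟩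
        exact gcl_smul' g (h1 hy)
      have h3 := Set.ncard_le_ncard h2 (hfin B hBf)
      rw [Set.ncard_image_of_injective _ (MulAction.injective g⁻¹)] at h3
      have h4 := Set.eq_of_subset_of_ncard_le (hYc B hB) h3 hYf
      exact hxB (h4 ▸ hx.1)
    obtain ⟨y, hy, hyB⟩ := Set.not_subset.1 hc2
    have hgx : g • x ∉ gcl G ((fun y => g • y) '' B) := by
      intro h; apply hxB; simpa using gcl_smul' g h
    obtain ⟨u, hu, hux⟩ := hQ _ (hBf.image _) (g • x) (hQi g x hx.2) y hy.2 hgx hyB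
    obtain ⟨h, hh1, hh2⟩ := ih ((gcl G X ∩ Q) \ insert x B).ncard (by
      rw [← hn]
      apply Set.ncard_lt_ncard _ ((hYf.inter_of_left _).sdiff)
      refine ⟨Set.sdiff_subset_sdiff_right (Set.subset_insert _ _), fun hs => ?_⟩
      have := hs ⟨hx, fun hxb => hxB (subset_gcl B hxb)⟩
      exact this.2 (Set.mem_insert _ _)) (insert x B) (u * g) rfl
      (Set.insert_subset hx.1 hB) (by
        intro b hb
        rcases hb with rfl | hb
        · rw [mul_smul, hux]; exact hy.1
        · rw [mul_smul, hu _ ⟨b, hb, rfl⟩]; exact hgB b hb)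
    refine ⟨h, hh1, fun b hb => ?_⟩
    rw [hh2 b (Set.mem_insert_of_mem _ hb), mul_smul, hu _ ⟨b, hb, rfl⟩]

theorem finAvg (G : Subgroup (Equiv.Perm ℕ)) (Y : Finset ℕ) :
    ∃ (H : Type) (_ : Fintype H) (_ : Nonempty H) (s : H → G),
      ∀ k : G, (∀ y ∈ Y, k.1 y ∈ Y) → ∃ e : H ≃ H, ∀ h, ∀ y ∈ Y,
        (k * s h * (s (e h))⁻¹).1 y = y := by
  classical
  let H : Subgroup (Equiv.Perm Y) :=
    { carrier := {σ | ∃ k : G, ∀ y : Y, k.1 y = σ y}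
      one_mem' := ⟨1, fun y => rfl⟩
      mul_mem' := by
        rintro a b ⟨k, hk⟩ ⟨l, hl⟩
        exact ⟨k * l, fun y => by simp [hk, hl]⟩
      inv_mem' := by
        rintro a ⟨k, hk⟩
        refine ⟨k⁻¹, fun y => ?_⟩
        have := hk (a⁻¹ y)
        rw [show a (a⁻¹ y) = y from a.apply_symm_apply y] at this
        rw [← this]; exact k.1.symm_apply_apply _ }
  choose s hs using fun h : H => h.2
  refine ⟨H, Fintype.ofFinite _, ⟨1⟩, s, ?_⟩
  intro k hk
  let f : Y → Y := fun y => ⟨k.1 y, hk y y.2⟩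
  have hf : Function.Bijective f := Finite.injective_iff_bijective.1 (by
    intro a b hab
    have := congrArg Subtype.val hab
    exact Subtype.ext (k.1.injective this))
  let σ : H := ⟨Equiv.ofBijective f hf, k, fun y => rfl⟩
  refine ⟨Equiv.mulLeft σ, fun h y hy => ?_⟩
  obtain ⟨z, hz⟩ := ((Equiv.mulLeft σ h).1).surjective ⟨y, hy⟩
  have h1 := hs (Equiv.mulLeft σ h) z
  rw [hz] at h1
  have h2 : (s (Equiv.mulLeft σ h)).1⁻¹ y = z := by
    rw [Equiv.Perm.inv_eq_iff_eq]; exact h1.symm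
  simp only [Subgroup.coe_mul, Subgroup.coe_inv, Equiv.Perm.mul_apply]
  rw [h2, hs h z]
  have h3 : ((Equiv.mulLeft σ h).1 z : Y) = f (h.1 z) := rfl
  rw [hz] at h3
  exact (congrArg Subtype.val h3).symm

theorem finAvg2 (G : Subgroup (Equiv.Perm ℕ))
    (hG : ∀ A : Finset ℕ, ∃ Y : Finset ℕ, A ⊆ Y ∧ ∀ B : Set ℕ, B ⊆ Y → ∀ g : G,
      (∀ b ∈ B, g.1 b ∈ Y) → ∃ k : G, (∀ y ∈ Y, k.1 y ∈ Y) ∧ ∀ b ∈ B, k.1 b = g.1 b)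
    (A : Finset ℕ) :
    ∃ (H : Type) (_ : Fintype H) (_ : Nonempty H) (s : H → G),
      ∀ (g : G) (A0 : Finset ℕ), A0 ⊆ A → (∀ a ∈ A0, g.1⁻¹ a ∈ A) →
        ∃ e : H ≃ H, ∀ h, ∀ y ∈ A0, (g * s h * (s (e h))⁻¹).1 y = y := by
  obtain ⟨Y, hAY, hY⟩ := hG A
  obtain ⟨H, i1, i2, s, hs⟩ := finAvg G Y
  refine ⟨H, i1, i2, s, fun g A0 h0 h1 => ?_⟩
  obtain ⟨k, hk, hkb⟩ := hY {b | g.1 b ∈ A0} (fun b hb => hAY (by simpa using h1 _ hb)) g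
    (fun b hb => hAY (h0 hb))
  obtain ⟨e, he⟩ := hs k hk
  refine ⟨e, fun h y hy => ?_⟩
  have e1 := he h y (hAY (h0 hy))
  have e2 : (g * k⁻¹).1 y = y := by
    have := hkb (g.1⁻¹ y) (by simpa using hy)
    rw [show g.1 (g.1⁻¹ y) = y from g.1.apply_symm_apply y] at this
    simp only [Subgroup.coe_mul, Subgroup.coe_inv, Equiv.Perm.mul_apply]
    have h2 : k.1⁻¹ y = g.1⁻¹ y := by
      rw [Equiv.Perm.inv_eq_iff_eq, this]
    rw [h2]; exact g.1.apply_symm_apply y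
  have : g * s h * (s (e h))⁻¹ = (g * k⁻¹) * (k * s h * (s (e h))⁻¹) := by group
  rw [this, Subgroup.coe_mul, Equiv.Perm.mul_apply, e1, e2]

theorem nhds_one_perm (U : Set (Equiv.Perm ℕ)) (hU : U ∈ nhds (1 : Equiv.Perm ℕ)) :
    ∃ A : Finset ℕ, ∀ g : Equiv.Perm ℕ, (∀ a ∈ A, g a = a) → g ∈ U := by
  rw [nhds_induced, Filter.mem_comap] at hU
  obtain ⟨t, ht, htU⟩ := hU
  rw [nhds_prod_eq, Filter.mem_prod_iff] at ht
  obtain ⟨t1, h1, t2, h2, h12⟩ := ht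
  rw [nhds_pi, Filter.mem_pi] at h1 h2
  obtain ⟨I1, hI1, s1, hs1, hs1'⟩ := h1
  obtain ⟨I2, hI2, s2, hs2, hs2'⟩ := h2
  refine ⟨hI1.toFinset ∪ hI2.toFinset, fun g hg => htU ?_⟩
  refine h12 ⟨hs1' ?_, hs2' ?_⟩
  · intro i hi
    have : g i = i := hg i (by simp [hi])
    show g i ∈ s1 i
    rw [this]; exact mem_of_mem_nhds (hs1 i)
  · intro i hi
    have : g i = i := hg i (by simp [hi])
    have h' : g⁻¹ i = i := by rw [Equiv.Perm.inv_eq_iff_eq, this]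
    show g⁻¹ i ∈ s2 i
    rw [h']; exact mem_of_mem_nhds (hs2 i)

theorem unif_small (G : Subgroup (Equiv.Perm ℕ)) {X : Type} [TopologicalSpace X] [CompactSpace X]
    [MulAction G X] (hc : ContinuousSMul G X) (f : X → ℝ) (hf : Continuous f) (ε : ℝ) (hε : 0 < ε) :
    ∃ A : Finset ℕ, ∀ g : G, (∀ a ∈ A, g.1 a = a) → ∀ x : X, |f (g • x) - f x| < ε := by
  let F : G × X → ℝ := fun p => |f (p.1 • p.2) - f p.2|
  have hF : Continuous F := by
    have h1 : Continuous fun p : G × X => p.1 • p.2 := hc.continuous_smul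
    exact ((hf.comp h1).sub (hf.comp continuous_snd)).abs
  have hev : ∀ᶠ g : G in nhds 1, ∀ x ∈ (Set.univ : Set X), F (g, x) < ε := by
    apply isCompact_univ.eventually_forall_of_forall_eventually
    intro x _
    have : F (1, x) < ε := by simp [F, hε]
    exact hF.continuousAt.eventually (gt_mem_nhds this) 
  rw [Filter.Eventually, nhds_subtype_eq_comap, Filter.mem_comap] at hev
  obtain ⟨U, hU, hUs⟩ := hev
  obtain ⟨A, hA⟩ := nhds_one_perm U hU
  exact ⟨A, fun g hg x => hUs (hA g.1 hg) x (Set.mem_univ x)⟩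

theorem exists_functional (G : Subgroup (Equiv.Perm ℕ))
    (hG : ∀ A : Finset ℕ, ∃ Y : Finset ℕ, A ⊆ Y ∧ ∀ B : Set ℕ, B ⊆ Y → ∀ g : G,
      (∀ b ∈ B, g.1 b ∈ Y) → ∃ k : G, (∀ y ∈ Y, k.1 y ∈ Y) ∧ ∀ b ∈ B, k.1 b = g.1 b)
    {X : Type} [TopologicalSpace X] [CompactSpace X] [Nonempty X]
    [MulAction G X] (hc : ContinuousSMul G X) :
    ∃ Λ : C(X, ℝ) → ℝ, (∀ f f', Λ (f + f') = Λ f + Λ f') ∧ (∀ (c : ℝ) f, Λ (c • f) = c * Λ f) ∧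
      (∀ f, (∀ x, 0 ≤ f x) → 0 ≤ Λ f) ∧ (∀ f, (∀ x, f x = 1) → Λ f = 1) ∧
      ∀ (g : G) (f f' : C(X, ℝ)), (∀ x, f' x = f (g • x)) → Λ f' = Λ f := by
  obtain ⟨x0⟩ := ‹Nonempty X›
  choose H i1 i2 s hs using finAvg2 G hG
  let Λ0 : Finset ℕ → C(X, ℝ) → ℝ := fun A f => (∑ h, f (s A h • x0)) / Fintype.card (H A)
  have hpos : ∀ A, (0 : ℝ) < Fintype.card (H A) := fun A => by
    exact_mod_cast Fintype.card_pos
  have hbd : ∀ A f, Λ0 A f ∈ Set.Icc (-‖f‖) ‖f‖ := by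
    intro A f
    rw [Set.mem_Icc, ← abs_le]
    simp only [Λ0]
    rw [abs_div, abs_of_pos (hpos A), div_le_iff₀ (hpos A)]
    calc |∑ h, f (s A h • x0)| ≤ ∑ h, |f (s A h • x0)| := Finset.abs_sum_le_sum_abs _ _
      _ ≤ ∑ h : H A, ‖f‖ := Finset.sum_le_sum fun h _ => f.norm_coe_le_norm _
      _ = _ := by simp [mul_comm]
  let 𝒰 : Ultrafilter (Finset ℕ) := Ultrafilter.of Filter.atTop
  have hlim : ∀ f, ∃ l, Filter.Tendsto (fun A => Λ0 A f) 𝒰 (nhds l) := by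
    intro f
    obtain ⟨l, _, hl⟩ := (isCompact_Icc (a := -‖f‖) (b := ‖f‖)).ultrafilter_le_nhds
      (𝒰.map fun A => Λ0 A f) (by
        rw [Filter.le_principal_iff]
        exact Filter.mem_map.2 (Filter.Eventually.of_forall (fun A => hbd A f)))
    exact ⟨l, hl⟩
  choose Λ hΛ using hlim
  refine ⟨Λ, ?_, ?_, ?_, ?_, ?_⟩
  · intro f f'
    refine tendsto_nhds_unique (hΛ _) (((hΛ f).add (hΛ f')).congr fun A => ?_)
    simp [Λ0, Finset.sum_add_distrib, add_div]
  · intro c f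
    refine tendsto_nhds_unique (hΛ _) (((hΛ f).const_mul c).congr fun A => ?_)
    simp [Λ0, ← Finset.mul_sum, mul_div_assoc]
  · intro f hf
    refine ge_of_tendsto' (hΛ f) fun A => ?_
    exact div_nonneg (Finset.sum_nonneg fun h _ => hf _) (hpos A).le
  · intro f hf
    refine tendsto_nhds_unique (hΛ _) (tendsto_const_nhds.congr fun A => ?_)
    simp [Λ0, hf]
  · intro g f f' hff
    refine tendsto_nhds_unique (hΛ _) ?_
    have : Filter.Tendsto (fun A => Λ0 A f' - Λ0 A f) 𝒰 (nhds 0) := by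
      rw [Metric.tendsto_nhds]
      intro ε hε
      obtain ⟨A0, hA0⟩ := unif_small G hc f f.continuous ε hε
      have hle : (𝒰 : Filter (Finset ℕ)) ≤ Filter.atTop := Ultrafilter.of_le _
      refine hle ?_
      classical
      filter_upwards [Filter.eventually_ge_atTop (A0 ∪ A0.image (fun a => g.1⁻¹ a))] with A hA
      obtain ⟨e, he⟩ := hs A g A0 (fun a ha => hA (Finset.mem_union_left _ ha))
        (fun a ha => hA (Finset.mem_union_right _ (Finset.mem_image_of_mem _ ha)))
      rw [Real.dist_eq, sub_zero]
      have h1 : Λ0 A f = (∑ h, f (s A (e h) • x0)) / Fintype.card (H A) := by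
        simp only [Λ0]
        rw [Equiv.sum_comp e (fun h => f (s A h • x0))]
      rw [h1]
      simp only [Λ0]
      rw [← sub_div, ← Finset.sum_sub_distrib, abs_div, abs_of_pos (hpos A), div_lt_iff₀ (hpos A)]
      calc |∑ h, (f' (s A h • x0) - f (s A (e h) • x0))|
          ≤ ∑ h, |f' (s A h • x0) - f (s A (e h) • x0)| := Finset.abs_sum_le_sum_abs _ _
        _ < ∑ h : H A, ε := by
          refine Finset.sum_lt_sum_of_nonempty Finset.univ_nonempty fun h _ => ?_
          have := hA0 _ (he h) (s A (e h) • x0)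
          rw [hff]
          simpa [mul_smul] using this
        _ = _ := by simp [mul_comm]
    have h2 := this.add (hΛ f)
    simpa using h2

theorem amenable_of (G : Subgroup (Equiv.Perm ℕ))
    (hG : ∀ A : Finset ℕ, ∃ Y : Finset ℕ, A ⊆ Y ∧ ∀ B : Set ℕ, B ⊆ Y → ∀ g : G,
      (∀ b ∈ B, g.1 b ∈ Y) → ∃ k : G, (∀ y ∈ Y, k.1 y ∈ Y) ∧ ∀ b ∈ B, k.1 b = g.1 b) :
    AmenableGroup G := by
  intro X _ _ _ _ _ hc
  letI : MeasurableSpace X := borel X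
  haveI : BorelSpace X := ⟨rfl⟩
  obtain ⟨Λ, hadd, hsmul, hnn, hone, hinv⟩ := exists_functional G hG hc
  let Λl : CompactlySupportedContinuousMap X ℝ →ₗ[ℝ] ℝ :=
    { toFun := fun f => Λ f.toContinuousMap
      map_add' := fun f f' => hadd _ _
      map_smul' := fun c f => hsmul _ _ }
  let Λp := PositiveLinearMap.mk₀ Λl (fun f hf => hnn _ (fun x => CompactlySupportedContinuousMap.le_def.1 hf x))
  have hΛp : ∀ f : CompactlySupportedContinuousMap X ℝ, Λp f = Λ f.toContinuousMap := fun _ => rfl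
  let μ := RealRMK.rieszMeasure Λp
  have hμ : ∀ f : CompactlySupportedContinuousMap X ℝ, ∫ x, f x ∂μ = Λ f.toContinuousMap :=
    fun f => RealRMK.integral_rieszMeasure Λp f
  have hr : μ.Regular := RealRMK.regular_rieszMeasure Λp
  have hfm : MeasureTheory.IsFiniteMeasure μ := inferInstance
  refine ⟨μ, ⟨?_⟩, ?_⟩
  · have h1 := hμ (CompactlySupportedContinuousMap.continuousMapEquiv (1 : C(X, ℝ)))
    rw [hone _ (fun x => rfl)] at h1
    have h2 : ∫ x : X, (1 : ℝ) ∂μ = 1 := h1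
    simp only [MeasureTheory.integral_const, smul_eq_mul, mul_one, MeasureTheory.measureReal_def] at h2
    exact (ENNReal.toReal_eq_one_iff _).1 h2
  · intro g
    let φ : X ≃ₜ X := Homeomorph.smul g
    have hr2 : (MeasureTheory.Measure.map (fun p => g • p) μ).Regular :=
      MeasureTheory.Measure.Regular.map (μ := μ) φ
    refine MeasureTheory.Measure.ext_of_integral_eq_on_compactlySupported fun f => ?_
    rw [hμ, MeasureTheory.integral_map]
    · have := hμ (CompactlySupportedContinuousMap.continuousMapEquiv
        (f.toContinuousMap.comp (⟨φ, φ.continuous⟩ : C(X, X))))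
      rw [hinv g f.toContinuousMap _ (fun x => rfl)] at this
      exact this
    · exact φ.continuous.measurable.aemeasurable
    · exact f.continuous.aestronglyMeasurable

theorem iso_of_equiv {L : FirstOrder.Language.{0, 0}} [L.Structure ℕ]
    (hcat : OmegaCategorical L ℕ) (N : Type) [L.Structure N] [Countable N]
    (h : L.ElementarilyEquivalent ℕ N) : Nonempty (ℕ ≃[L] N) := by
  have hi : Infinite N := h.infinite_iff.1 inferInstance
  have hm : N ⊨ L.completeTheory ℕ := by
    have : L.completeTheory ℕ = L.completeTheory N := h
    rw [this]; infer_instance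
  exact hcat (Theory.ModelType.of (L.completeTheory ℕ) ℕ) (Theory.ModelType.of (L.completeTheory ℕ) N)
    (by simp) (Cardinal.mk_eq_aleph0 N)

theorem definable_nat_dep {L : FirstOrder.Language.{0, 0}} [L.Structure ℕ]
    {C : Set (ℕ → ℕ)} (hC : (∅ : Set ℕ).Definable L C) :
    ∃ m, ∀ m' ≥ m, ∃ C0 : Set (Fin m' → ℕ), (∅ : Set ℕ).Definable L C0 ∧
      ∀ v, v ∈ C ↔ (fun i : Fin m' => v i) ∈ C0 := by
  classical
  rw [Set.empty_definable_iff] at hC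
  obtain ⟨φ, rfl⟩ := hC
  refine ⟨φ.freeVarFinset.sup id + 1, fun m' hm' => ?_⟩
  have hlt : ∀ i : φ.freeVarFinset, i.1 < m' := fun i => by
    have := Finset.le_sup (f := id) i.2
    simp only [id] at this
    omega
  refine ⟨_, (Set.empty_definable_iff).2 ⟨(φ.restrictFreeVar (fun i => (⟨i.1, hlt i⟩ : Fin m'))), rfl⟩, ?_⟩
  intro v
  simp only [Set.mem_ofPred_eq]
  unfold Formula.Realize
  rw [BoundedFormula.realize_restrictFreeVar (v' := v)]
  intro a
  rfl

theorem definable_setOf {L : FirstOrder.Language.{0, 0}} [L.Structure ℕ] {α : Type}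
    (φ : L.Formula α) : (∅ : Set ℕ).Definable L {v : α → ℕ | φ.Realize v} :=
  (Set.empty_definable_iff).2 ⟨φ, rfl⟩

theorem definable_bdd {L : FirstOrder.Language.{0, 0}} [L.Structure ℕ] {k : ℕ}
    (ψ : L.BoundedFormula Empty k) :
    (∅ : Set ℕ).Definable L {v : Fin k → ℕ | ψ.Realize default v} := by
  refine (Set.empty_definable_iff).2
    ⟨(BoundedFormula.toFormula ψ).relabel (Sum.elim Empty.elim id), ?_⟩
  ext v
  simp only [Set.mem_ofPred_eq, Formula.realize_relabel, BoundedFormula.realize_toFormula]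
  have : (v ∘ Sum.elim Empty.elim id) ∘ Sum.inl = (default : Empty → ℕ) := Subsingleton.elim _ _
  rw [this]
  rfl

theorem exists_ultra (P : ℕ → Set (ℕ → ℕ)) (hP : ∀ n, (P n).Nonempty) (hm : Antitone P) :
    ∃ U : Ultrafilter (ℕ → ℕ), ∀ n, P n ∈ U := by
  have : (⨅ n, Filter.principal (P n)).NeBot := by
    apply Filter.iInf_neBot_of_directed'
    · exact (directed_of_isDirected_le (fun i j h => Filter.principal_mono.2 (hm h)))
    · intro n; exact Filter.principal_neBot_iff.2 (hP n)
  refine ⟨Ultrafilter.of _, fun n => Ultrafilter.of_le (⨅ n, Filter.principal (P n)) ?_⟩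
  exact Filter.mem_iInf_of_mem n (Filter.mem_principal_self _)

/-- Conditions for the omitting types construction. -/
structure Cond (L : FirstOrder.Language.{0, 0}) [L.Structure ℕ] where
  s : Set (ℕ → ℕ)
  ne : s.Nonempty
  defble : (∅ : Set ℕ).Definable L s

instance condPreorder (L : FirstOrder.Language.{0, 0}) [L.Structure ℕ] : Preorder (Cond L) where
  le a b := b.s ⊆ a.s
  le_refl a := Set.Subset.rfl
  le_trans a b c h1 h2 := Set.Subset.trans h2 h1

/-- Henkin witnesses. -/
def henkin (L : FirstOrder.Language.{0, 0}) [L.Structure ℕ]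
    (k : ℕ) (ψ : L.BoundedFormula Empty (k + 1)) (j : Fin k → ℕ) : Order.Cofinal (Cond L) where
  carrier := {C | (∀ v ∈ C.s, ¬ ∃ x : ℕ, ψ.Realize default (Fin.snoc (v ∘ j) x : Fin (k + 1) → ℕ)) ∨
    ∃ i, ∀ v ∈ C.s, ψ.Realize default (Fin.snoc (v ∘ j) (v i) : Fin (k + 1) → ℕ)}
  isCofinal := by
    intro C
    by_cases h : ∀ v ∈ C.s, ¬ ∃ x : ℕ, ψ.Realize default (Fin.snoc (v ∘ j) x : Fin (k + 1) → ℕ)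
    · exact ⟨C, Or.inl h, le_rfl⟩
    push Not at h
    obtain ⟨v, hv, x, hx⟩ := h
    obtain ⟨m, hm⟩ := definable_nat_dep C.defble
    obtain ⟨i, him, hij⟩ : ∃ i, m ≤ i ∧ ∀ l, j l ≠ i := by
      refine ⟨m + (Finset.univ.sup j) + 1, by omega, fun l hl => ?_⟩
      have := Finset.le_sup (f := j) (Finset.mem_univ l)
      omega
    obtain ⟨C0, hC0, hCC⟩ := hm m le_rfl
    let w := Function.update v i x
    have hwC : w ∈ C.s := by
      rw [hCC] at hv ⊢
      convert hv using 2 with l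
      simp only [w]
      rw [Function.update_of_ne]
      have := l.2
      omega
    have hwj : w ∘ j = v ∘ j := by
      ext l
      simp only [w, Function.comp]
      rw [Function.update_of_ne (hij l)]
    refine ⟨⟨C.s ∩ {v | ψ.Realize default (Fin.snoc (v ∘ j) (v i) : Fin (k + 1) → ℕ)},
      ⟨w, hwC, ?_⟩, C.defble.inter ?_⟩, Or.inr ⟨i, fun v hv => hv.2⟩, Set.inter_subset_left⟩
    · simp only [Set.mem_ofPred_eq]
      rw [hwj]
      simpa [w] using hx
    · have := (definable_bdd ψ).preimage_comp (Fin.snoc j i : Fin (k + 1) → ℕ)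
      convert this using 1
      ext v
      simp only [Set.mem_ofPred_eq, Set.mem_preimage, Fin.comp_snoc]

/-- Omitting the type of `a`. -/
def omitReq (L : FirstOrder.Language.{0, 0}) [L.Structure ℕ] {α : Type} [Finite α] (a : α → ℕ)
    (hni : ∀ χ : L.Formula α, χ.Realize a →
      ∃ b : α → ℕ, χ.Realize b ∧ ∃ θ : L.Formula α, θ.Realize b ∧ ¬ θ.Realize a)
    (j : α → ℕ) : Order.Cofinal (Cond L) where
  carrier := {C | ∃ θ : L.Formula α, ¬ θ.Realize a ∧ ∀ v ∈ C.s, θ.Realize (v ∘ j)}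
  isCofinal := by
    intro C
    by_cases h : ∃ v ∈ C.s, ∃ θ : L.Formula α, θ.Realize (v ∘ j) ∧ ¬ θ.Realize a
    · obtain ⟨v, hv, θ, hθ, hθa⟩ := h
      exact ⟨⟨C.s ∩ {v | θ.Realize (v ∘ j)}, ⟨v, hv, hθ⟩,
        C.defble.inter ((definable_setOf θ).preimage_comp j)⟩,
        ⟨θ, hθa, fun v hv => hv.2⟩, Set.inter_subset_left⟩
    exfalso
    push Not at h
    obtain ⟨m, hm⟩ := definable_nat_dep C.defble
    obtain ⟨m', hm', hj⟩ : ∃ m', m ≤ m' ∧ ∀ l, j l < m' := by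
      have := Fintype.ofFinite α
      refine ⟨m + (Finset.univ.sup j) + 1, by omega, fun l => ?_⟩
      have := Finset.le_sup (f := j) (Finset.mem_univ l)
      omega
    obtain ⟨C0, hC0, hCC⟩ := hm m' hm'
    have hP := hC0.image_comp (fun l : α => (⟨j l, hj l⟩ : Fin m'))
    rw [Set.empty_definable_iff] at hP
    obtain ⟨χ, hχ⟩ := hP
    obtain ⟨v, hv⟩ := C.ne
    have hχv : χ.Realize (v ∘ j) := by
      have : v ∘ j ∈ Set.ofPred χ.Realize := by
        rw [← hχ]
        exact ⟨_, (hCC v).1 hv, rfl⟩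
      exact this
    obtain ⟨b, hb, θ, hθ, hθa⟩ := hni χ (h v hv χ hχv)
    have hb' : b ∈ Set.ofPred χ.Realize := hb
    rw [← hχ] at hb'
    obtain ⟨w, hw, rfl⟩ := hb'
    let v' : ℕ → ℕ := fun n => if hn : n < m' then w ⟨n, hn⟩ else 0
    have hv'w : (fun i : Fin m' => v' i) = w := by
      ext i; simp [v']
    refine hθa (h v' ((hCC v').2 (hv'w ▸ hw)) θ ?_)
    convert hθ using 1
    ext l
    simp [v', hj l]

theorem isolated {L : FirstOrder.Language.{0, 0}} [L.Structure ℕ] [L.IsRelational]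
    [Countable L.Symbols] (hcat : OmegaCategorical L ℕ) {α : Type} [Finite α] (a : α → ℕ) :
    ∃ χ : L.Formula α, χ.Realize a ∧ ∀ b : α → ℕ, χ.Realize b → ∀ θ : L.Formula α,
      θ.Realize b → θ.Realize a := by
  by_contra hcon
  have hni : ∀ χ : L.Formula α, χ.Realize a →
      ∃ b : α → ℕ, χ.Realize b ∧ ∃ θ : L.Formula α, θ.Realize b ∧ ¬ θ.Realize a := by
    intro χ hχ
    by_contra h
    push Not at h
    exact hcon ⟨χ, hχ, h⟩
  have hcnt : ∀ k, Countable (L.BoundedFormula Empty (k + 1)) := fun k =>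
    (sigma_mk_injective (β := fun n => L.BoundedFormula Empty n) (i := k + 1)).countable
  let ι := (Σ k, L.BoundedFormula Empty (k + 1) × (Fin k → ℕ)) ⊕ (α → ℕ)
  have : Countable ι := inferInstance
  let _ : Encodable ι := Encodable.ofCountable ι
  let 𝒟 : ι → Order.Cofinal (Cond L) :=
    Sum.elim (fun p => henkin L p.1 p.2.1 p.2.2) (omitReq L a hni)
  let p0 : Cond L := ⟨Set.univ, ⟨fun _ => 0, trivial⟩, Set.definable_univ⟩
  let q := Order.sequenceOfCofinals p0 𝒟
  obtain ⟨U, hU⟩ := exists_ultra (fun n => (q n).s) (fun n => (q n).ne)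
    (fun i j hij => Order.sequenceOfCofinals.monotone p0 𝒟 hij)
  have hmeet : ∀ i, ∃ n, q n ∈ 𝒟 i := fun i => ⟨_, Order.sequenceOfCofinals.encode_mem p0 𝒟 i⟩
  let PP := (U : Filter (ℕ → ℕ)).Product (fun _ => ℕ)
  let c : ℕ → PP := fun j => Quotient.mk (Filter.productSetoid (U : Filter (ℕ → ℕ)) (fun _ => ℕ)) (fun v : ℕ → ℕ => v j)
  let S : L.Substructure PP :=
    { carrier := Set.range c
      fun_mem := fun f => isEmptyElim f }
  have hS : S.IsElementary := by
    apply Substructure.isElementary_of_exists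
    intro n ψ x b hb
    choose j hj using fun i => (x i).2
    obtain ⟨f, rfl⟩ := Quotient.exists_rep b
    have key : ∀ (d : Empty → PP) (f : (ℕ → ℕ) → ℕ), (ψ.Realize d
        (Fin.snoc ((↑) ∘ x) (Quotient.mk (Filter.productSetoid (U : Filter (ℕ → ℕ)) (fun _ => ℕ)) f : PP) : Fin (n + 1) → PP) ↔
        ∀ᶠ v in U, ψ.Realize default (Fin.snoc (v ∘ j) (f v) : Fin (n + 1) → ℕ)) := by
      intro d f
      have := Ultraproduct.boundedFormula_realize_cast (u := U) (M := fun _ => ℕ) ψ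
        (default : Empty → _) (Fin.snoc (fun i v => v (j i)) f : Fin (n + 1) → (ℕ → ℕ) → ℕ)
      convert this using 1
      · congr! 1
        · ext i
          refine Fin.lastCases ?_ (fun i => ?_) i
          · refine (Fin.snoc_last (α := fun _ => PP) _ _).trans ?_
            rw [Fin.snoc_last]
            rfl
          · refine (Fin.snoc_castSucc (α := fun _ => PP) _ _ _).trans ?_
            rw [Fin.snoc_castSucc]
            exact (hj i).symm
      · congr! 3 with v
        · ext i
          refine Fin.lastCases ?_ (fun i => ?_) i
          · simp only [Fin.snoc_last]
          · simp only [Fin.snoc_castSucc, Function.comp]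
    have hb' := (key _ f).1 hb
    obtain ⟨m, hm⟩ := hmeet (Sum.inl ⟨n, ψ, j⟩)
    rcases hm with hm | ⟨i, hm⟩
    · exfalso
      obtain ⟨v, hv1, hv2⟩ := (hb'.and (hU m)).exists
      exact hm v hv2 ⟨_, hv1⟩
    · refine ⟨⟨c i, i, rfl⟩, (key _ _).2 ?_⟩
      filter_upwards [hU m] with v hv
      exact hm v hv
  let S' : L.ElementarySubstructure PP := ⟨S, hS⟩
  have hPP : L.ElementarilyEquivalent ℕ PP := by
    rw [elementarilyEquivalent_iff]
    intro φ
    rw [Ultraproduct.sentence_realize]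
    simp
  have hS'c : Countable S' := (Set.countable_range c).to_subtype
  obtain ⟨e⟩ := iso_of_equiv hcat S' (hPP.trans S'.elementarilyEquivalent.symm)
  choose j hj using fun i => (e (a i)).2
  obtain ⟨m, θ, hθa, hθ⟩ := hmeet (Sum.inr j)
  apply hθa
  have h1 : θ.Realize (fun i => c (j i)) := by
    refine (Ultraproduct.realize_formula_cast (u := U) (M := fun _ => ℕ) θ (fun i v => v (j i))).2 ?_
    filter_upwards [hU m] with v hv
    exact hθ v hv
  have h2 : θ.Realize (fun i => e (a i)) := by
    rw [← S'.subtype.map_formula θ (fun i => e (a i))]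
    convert h1 using 1
    ext i
    exact (hj i).symm
  exact (StrongHomClass.realize_formula e θ).1 h2

theorem isolated_iff {L : FirstOrder.Language.{0, 0}} [L.Structure ℕ] [L.IsRelational]
    [Countable L.Symbols] (hcat : OmegaCategorical L ℕ) {α : Type} [Finite α] (a : α → ℕ) :
    ∃ χ : L.Formula α, χ.Realize a ∧ ∀ b : α → ℕ, χ.Realize b → ∀ θ : L.Formula α,
      θ.Realize a ↔ θ.Realize b := by
  obtain ⟨χ, h1, h2⟩ := isolated hcat a
  refine ⟨χ, h1, fun b hb θ => ⟨fun h => ?_, h2 b hb θ⟩⟩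
  by_contra h'
  have := h2 b hb θ.not (by simpa using h')
  exact (by simpa using this : ¬ θ.Realize a) h

/-- A finite partial elementary map. -/
structure PCond (L : FirstOrder.Language.{0, 0}) [L.Structure ℕ] where
  α : Type
  fin : Finite α
  a : α → ℕ
  b : α → ℕ
  same : ∀ θ : L.Formula α, θ.Realize a ↔ θ.Realize b

instance pcondPreorder (L : FirstOrder.Language.{0, 0}) [L.Structure ℕ] : Preorder (PCond L) where
  le p q := ∀ i, ∃ j, q.a j = p.a i ∧ q.b j = p.b i
  le_refl p := fun i => ⟨i, rfl, rfl⟩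
  le_trans p q r h1 h2 := fun i => by
    obtain ⟨j, hj1, hj2⟩ := h1 i
    obtain ⟨k, hk1, hk2⟩ := h2 j
    exact ⟨k, hk1.trans hj1, hk2.trans hj2⟩

theorem ext_step {L : FirstOrder.Language.{0, 0}} [L.Structure ℕ] [L.IsRelational]
    [Countable L.Symbols] (hcat : OmegaCategorical L ℕ) {α : Type} [Finite α] (a b : α → ℕ)
    (h : ∀ θ : L.Formula α, θ.Realize a ↔ θ.Realize b) (x : ℕ) :
    ∃ y : ℕ, ∀ θ : L.Formula (α ⊕ Unit),
      θ.Realize (Sum.elim a fun _ => x) ↔ θ.Realize (Sum.elim b fun _ => y) := by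
  obtain ⟨χ, h1, h2⟩ := isolated_iff hcat (Sum.elim a fun _ : Unit => x)
  have hP := (definable_setOf χ).image_comp (Sum.inl : α → α ⊕ Unit)
  rw [Set.empty_definable_iff] at hP
  obtain ⟨φ, hφ⟩ := hP
  have ha : φ.Realize a := by
    have : a ∈ Set.ofPred φ.Realize := by
      rw [← hφ]
      exact ⟨_, h1, by ext i; rfl⟩
    exact this
  have hb : b ∈ Set.ofPred φ.Realize := (h φ).1 ha
  rw [← hφ] at hb
  obtain ⟨w, hw, hwb⟩ := hb
  refine ⟨w (Sum.inr ()), fun θ => ?_⟩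
  rw [h2 w hw θ]
  have : w = Sum.elim b fun _ => w (Sum.inr ()) := by
    ext i
    rcases i with i | i
    · exact congrFun hwb i
    · rfl
  rw [← this]

/-- Going forth. -/
def forthC {L : FirstOrder.Language.{0, 0}} [L.Structure ℕ] [L.IsRelational]
    [Countable L.Symbols] (hcat : OmegaCategorical L ℕ) (x : ℕ) : Order.Cofinal (PCond L) where
  carrier := {p | ∃ i, p.a i = x}
  isCofinal := by
    intro p
    have := p.fin
    obtain ⟨y, hy⟩ := ext_step hcat p.a p.b p.same x
    exact ⟨⟨p.α ⊕ Unit, inferInstance, _, _, hy⟩, ⟨Sum.inr (), rfl⟩, fun i => ⟨Sum.inl i, rfl, rfl⟩⟩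

/-- Going back. -/
def backC {L : FirstOrder.Language.{0, 0}} [L.Structure ℕ] [L.IsRelational]
    [Countable L.Symbols] (hcat : OmegaCategorical L ℕ) (x : ℕ) : Order.Cofinal (PCond L) where
  carrier := {p | ∃ i, p.b i = x}
  isCofinal := by
    intro p
    have := p.fin
    obtain ⟨y, hy⟩ := ext_step hcat p.b p.a (fun θ => (p.same θ).symm) x
    exact ⟨⟨p.α ⊕ Unit, inferInstance, _, _, fun θ => (hy θ).symm⟩, ⟨Sum.inr (), rfl⟩,
      fun i => ⟨Sum.inl i, rfl, rfl⟩⟩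

theorem homogeneous {L : FirstOrder.Language.{0, 0}} [L.Structure ℕ] [L.IsRelational]
    [Countable L.Symbols] (hcat : OmegaCategorical L ℕ) {α : Type} [Finite α] (a b : α → ℕ)
    (h : ∀ θ : L.Formula α, θ.Realize a ↔ θ.Realize b) :
    ∃ e : ℕ ≃[L] ℕ, ∀ i, e (a i) = b i := by
  let p0 : PCond L := ⟨α, inferInstance, a, b, h⟩
  let 𝒟 : ℕ ⊕ ℕ → Order.Cofinal (PCond L) := Sum.elim (forthC hcat) (backC hcat)
  let q := Order.sequenceOfCofinals p0 𝒟
  have hmono : Monotone q := Order.sequenceOfCofinals.monotone p0 𝒟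
  have hmeet : ∀ i, ∃ n, q n ∈ 𝒟 i := fun i => ⟨_, Order.sequenceOfCofinals.encode_mem p0 𝒟 i⟩
  let R : ℕ → ℕ → Prop := fun x y => ∃ n, ∃ i, (q n).a i = x ∧ (q n).b i = y
  have hR1 : ∀ x, ∃ y, R x y := fun x => by
    obtain ⟨n, i, hi⟩ := hmeet (Sum.inl x)
    exact ⟨_, n, i, hi, rfl⟩
  have hR2 : ∀ y, ∃ x, R x y := fun x => by
    obtain ⟨n, i, hi⟩ := hmeet (Sum.inr x)
    exact ⟨_, n, i, rfl, hi⟩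
  have hR : ∀ (k : ℕ) (s t : Fin k → ℕ), (∀ i, R (s i) (t i)) →
      ∀ θ : L.Formula (Fin k), θ.Realize s ↔ θ.Realize t := by
    intro k s t hst θ
    choose n hn using hst
    have : ∀ i, ∃ j, (q (Finset.univ.sup n)).a j = s i ∧ (q (Finset.univ.sup n)).b j = t i := by
      intro i
      obtain ⟨j, hj1, hj2⟩ := hn i
      obtain ⟨j', h1, h2⟩ := hmono (Finset.le_sup (f := n) (Finset.mem_univ i)) j
      exact ⟨j', h1.trans hj1, h2.trans hj2⟩
    choose j hj1 hj2 using this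
    have := (q (Finset.univ.sup n)).same (θ.relabel j)
    rw [Formula.realize_relabel, Formula.realize_relabel] at this
    have e1 : (q (Finset.univ.sup n)).a ∘ j = s := funext hj1
    have e2 : (q (Finset.univ.sup n)).b ∘ j = t := funext hj2
    rwa [e1, e2] at this
  have hinj : ∀ x x' y y', R x y → R x' y' → (x = x' ↔ y = y') := by
    intro x x' y y' h1 h2
    have := hR 2 ![x, x'] ![y, y'] (by intro i; fin_cases i <;> simpa)
      (Term.equal (Term.var 0) (Term.var 1))
    simpa [Formula.realize_equal] using this
  choose f hf using hR1
  choose g hg using hR2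
  let e : ℕ ≃ ℕ := ⟨f, g, fun x => (hinj _ _ _ _ (hg (f x)) (hf x)).2 rfl,
    fun y => (hinj _ _ _ _ (hf (g y)) (hg y)).1 rfl⟩
  refine ⟨⟨e, fun {n} F => isEmptyElim F, fun {n} r x => ?_⟩, fun i => ?_⟩
  · have := hR n x (e ∘ x) (fun i => hf (x i)) (r.formula (fun i => Term.var i))
    simp only [Formula.realize_rel, Term.realize_var] at this
    exact this.symm
  · have : R (a i) (b i) := ⟨0, i, rfl, rfl⟩
    exact (hinj _ _ _ _ (hf (a i)) this).1 rfl

theorem orbit_formula {L : FirstOrder.Language.{0, 0}} [L.Structure ℕ] [L.IsRelational]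
    [Countable L.Symbols] (hcat : OmegaCategorical L ℕ) {α : Type} [Finite α] (a : α → ℕ) :
    ∃ χ : L.Formula α, ∀ b : α → ℕ, χ.Realize b ↔ ∃ e : ℕ ≃[L] ℕ, ∀ i, e (a i) = b i := by
  obtain ⟨χ, h1, h2⟩ := isolated_iff hcat a
  refine ⟨χ, fun b => ⟨fun h => homogeneous hcat a b (h2 b h), ?_⟩⟩
  rintro ⟨e, he⟩
  have := (StrongHomClass.realize_formula e χ (v := a)).2 h1
  have e1 : e ∘ a = b := funext he
  rwa [e1] at this

theorem finite_orbits {L : FirstOrder.Language.{0, 0}} [L.Structure ℕ] [L.IsRelational]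
    [Countable L.Symbols] (hcat : OmegaCategorical L ℕ) (α : Type) [Finite α] :
    ∃ R : Set (α → ℕ), R.Finite ∧ ∀ b : α → ℕ, ∃ a ∈ R, ∃ e : ℕ ≃[L] ℕ, ∀ i, e (a i) = b i := by
  by_contra hcon
  push Not at hcon
  obtain ⟨t, ht⟩ := exists_surjective_nat (α → ℕ)
  have : ∀ k : ℕ, ∃ b : α → ℕ, ∀ m ≤ k, ¬ ∃ e : ℕ ≃[L] ℕ, ∀ i, e (t m i) = b i := by
    intro k
    obtain ⟨b, hb⟩ := hcon (t '' Set.Iic k) ((Set.finite_Iic k).image t)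
    refine ⟨b, fun m hm => ?_⟩
    rintro ⟨e, he⟩
    obtain ⟨i, hi⟩ := hb (t m) ⟨m, hm, rfl⟩ e
    exact hi (he i)
  choose b hb using this
  let U : Ultrafilter ℕ := Filter.hyperfilter ℕ
  let PP := (U : Filter ℕ).Product (fun _ => ℕ)
  let c : α → PP := fun i => Quotient.mk (Filter.productSetoid (U : Filter ℕ) (fun _ => ℕ))
    (fun k => b k i)
  have hPP : L.ElementarilyEquivalent ℕ PP := by
    rw [elementarilyEquivalent_iff]
    intro φ
    rw [Ultraproduct.sentence_realize]
    simp
  have : Infinite PP := hPP.infinite_iff.1 inferInstance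
  have hLc : L.card ≤ Cardinal.aleph0 := Cardinal.mk_le_aleph0_iff.2 ‹_›
  obtain ⟨S', hcS, hcard⟩ := exists_elementarySubstructure_card_eq L (Set.range c) Cardinal.aleph0.{0}
    le_rfl (by simpa using (Set.countable_range c).le_aleph0) (by simpa using hLc) (by simp)
  have hS'c : Countable S' := by
    rw [← Cardinal.mk_le_aleph0_iff]
    simpa using hcard.le
  obtain ⟨e⟩ := iso_of_equiv hcat S' (hPP.trans S'.elementarilyEquivalent.symm)
  let c' : α → S' := fun i => ⟨c i, hcS ⟨i, rfl⟩⟩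
  let d : α → ℕ := fun i => e.symm (c' i)
  obtain ⟨χ, hχ⟩ := orbit_formula hcat d
  have h0 : χ.Realize d := (hχ d).2 ⟨Language.Equiv.refl L ℕ, fun i => rfl⟩
  have h1 : χ.Realize c' := by
    have := (StrongHomClass.realize_formula e χ (v := d)).2 h0
    have e1 : e ∘ d = c' := by
      ext i
      simp [d]
    rwa [e1] at this
  have h2 : χ.Realize c := (S'.subtype.map_formula χ c').2 h1
  have h3 : ∀ᶠ k in U, χ.Realize (b k) :=
    (Ultraproduct.realize_formula_cast (u := U) (M := fun _ => ℕ) χ (fun i k => b k i)).1 h2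
  obtain ⟨m, hm⟩ := ht d
  have h4 : ∀ᶠ k in (U : Filter ℕ), m ≤ k := by
    apply Filter.hyperfilter_le_cofinite
    rw [Nat.cofinite_eq_atTop]
    exact Filter.eventually_ge_atTop m
  obtain ⟨k, hk1, hk2⟩ := (h3.and h4).exists
  exact hb k m hk2 (by rw [hm]; exact (hχ _).1 hk1)

theorem definable_of_invariant {L : FirstOrder.Language.{0, 0}} [L.Structure ℕ] [L.IsRelational]
    [Countable L.Symbols] (hcat : OmegaCategorical L ℕ) (α : Type) [Finite α]
    (P : Set (α → ℕ)) (hP : ∀ e : ℕ ≃[L] ℕ, ∀ v ∈ P, (fun i => e (v i)) ∈ P) :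
    (∅ : Set ℕ).Definable L P := by
  classical
  obtain ⟨R, hR, hRo⟩ := finite_orbits hcat α
  choose χ hχ using fun a : α → ℕ => orbit_formula hcat a
  have hfin : (R ∩ P).Finite := hR.inter_of_left P
  have : P = ⋃ a ∈ hfin.toFinset, {v : α → ℕ | (χ a).Realize v} := by
    ext v
    simp only [Set.Finite.mem_toFinset, Set.mem_iUnion, Set.mem_ofPred_eq]
    constructor
    · intro hv
      obtain ⟨a, ha, e, he⟩ := hRo v
      refine ⟨a, ⟨ha, ?_⟩, (hχ a v).2 ⟨e, he⟩⟩
      have := hP e.symm v hv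
      convert this using 2 with i
      rw [← he]
      simp
    · rintro ⟨a, ⟨_, ha⟩, hv⟩
      obtain ⟨e, he⟩ := (hχ a v).1 hv
      convert hP e a ha using 2 with i
      exact (he i).symm
  rw [this]
  exact Set.definable_biUnion_finset (fun a => definable_setOf (χ a)) _

/-- The action on real and imaginary elements. -/
@[reducible] def omAct {L : FirstOrder.Language.{0, 0}} [L.Structure ℕ] (S : ImagSort L ℕ)
    (G : Subgroup (Equiv.Perm ℕ))
    (hinv : ∀ (g : G) (v w : Fin S.n → ℕ), S.rel v w →
      S.rel (fun i => g.1 (v i)) (fun i => g.1 (w i))) :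
    MulAction G (ℕ ⊕ Quot S.rel) where
  smul g := Sum.map g.1 (Quot.map (fun v i => g.1 (v i)) (hinv g))
  one_smul x := by
    rcases x with x | x
    · rfl
    · obtain ⟨v, rfl⟩ := Quot.exists_rep x
      rfl
  mul_smul g h x := by
    rcases x with x | x
    · rfl
    · obtain ⟨v, rfl⟩ := Quot.exists_rep x
      rfl

theorem definable_inv {L : FirstOrder.Language.{0, 0}} [L.Structure ℕ] {α : Type}
    {P : Set (α → ℕ)} (hP : (∅ : Set ℕ).Definable L P) (e : ℕ ≃[L] ℕ) (v : α → ℕ) (hv : v ∈ P) :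
    (fun i => e (v i)) ∈ P := by
  rw [Set.empty_definable_iff] at hP
  obtain ⟨φ, rfl⟩ := hP
  exact (StrongHomClass.realize_formula e φ (v := v)).2 hv

theorem finite_orbits_over {L : FirstOrder.Language.{0, 0}} [L.Structure ℕ] [L.IsRelational]
    [Countable L.Symbols] (hcat : OmegaCategorical L ℕ) (β : Type) [Finite β] (F : Set ℕ)
    (hF : F.Finite) :
    ∃ R : Set (β → ℕ), R.Finite ∧ ∀ w : β → ℕ, ∃ v ∈ R, ∃ e : ℕ ≃[L] ℕ,
      (∀ f ∈ F, e f = f) ∧ ∀ i, e (v i) = w i := by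
  classical
  have := hF.to_subtype
  obtain ⟨R, hR, hRo⟩ := finite_orbits hcat (F ⊕ β)
  have : ∀ r : F ⊕ β → ℕ, ∃ w0 : β → ℕ, (∃ w : β → ℕ, ∃ e : ℕ ≃[L] ℕ,
      ∀ i, e (r i) = Sum.elim (fun f : F => (f : ℕ)) w i) → ∃ e : ℕ ≃[L] ℕ,
      ∀ i, e (r i) = Sum.elim (fun f : F => (f : ℕ)) w0 i := by
    intro r
    by_cases h : ∃ w : β → ℕ, ∃ e : ℕ ≃[L] ℕ,
      ∀ i, e (r i) = Sum.elim (fun f : F => (f : ℕ)) w i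
    · obtain ⟨w, hw⟩ := h
      exact ⟨w, fun _ => hw⟩
    · exact ⟨fun _ => 0, fun h' => absurd h' h⟩
  choose w0 hw0 using this
  refine ⟨w0 '' R, hR.image _, fun w => ?_⟩
  obtain ⟨r, hr, e, he⟩ := hRo (Sum.elim (fun f : F => (f : ℕ)) w)
  obtain ⟨e', he'⟩ := hw0 r ⟨w, e, he⟩
  refine ⟨w0 r, ⟨r, hr, rfl⟩, e.comp e'.symm, fun f hf => ?_, fun i => ?_⟩
  · have h1 := he (Sum.inl ⟨f, hf⟩)
    have h2 := he' (Sum.inl ⟨f, hf⟩)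
    simp only [Sum.elim_inl] at h1 h2
    rw [Language.Equiv.comp_apply]
    conv_lhs => rw [← h2]
    simpa using h1
  · have h1 := he (Sum.inr i)
    have h2 := he' (Sum.inr i)
    simp only [Sum.elim_inr] at h1 h2
    rw [Language.Equiv.comp_apply, ← h2]
    simpa using h1

theorem rel_of_mk {L : FirstOrder.Language.{0, 0}} [L.Structure ℕ] (S : ImagSort L ℕ)
    {v w : Fin S.n → ℕ} (h : Quot.mk S.rel v = Quot.mk S.rel w) : S.rel v w :=
  (S.equiv.eqvGen_iff).1 (Quot.eqvGen_exact h)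

theorem main_amenable {L : FirstOrder.Language.{0, 0}} [L.Structure ℕ] [L.IsRelational]
    [Countable L.Symbols] (hcat : OmegaCategorical L ℕ) (S : ImagSort L ℕ)
    (D : Set (Fin S.n → ℕ)) (hmin : ImStrictlyMinimal S D)
    (hacl : ∀ a : ℕ, a ∈ realAclOverIm S D) (G : Subgroup (Equiv.Perm ℕ))
    (hG1 : ∀ g : G, ∃ e : ℕ ≃[L] ℕ, ∀ x, e x = g.1 x)
    (hG2 : ∀ e : ℕ ≃[L] ℕ, ∃ g : G, ∀ x, g.1 x = e x) : AmenableGroup G := by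
  classical
  obtain ⟨hDdef, hDinv, ⟨hDinf, hDsm⟩, -⟩ := hmin
  have hinv : ∀ (g : G) (v w : Fin S.n → ℕ), S.rel v w →
      S.rel (fun i => g.1 (v i)) (fun i => g.1 (w i)) := by
    intro g v w hvw
    obtain ⟨e, he⟩ := hG1 g
    have := definable_inv S.defble e (Sum.elim v w) hvw
    simpa [he] using this
  let act : MulAction G (ℕ ⊕ Quot S.rel) := omAct S G hinv
  have act1 : ∀ (g : G) (m : ℕ), g • (Sum.inl m : ℕ ⊕ Quot S.rel) = Sum.inl (g.1 m) :=
    fun g m => rfl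
  have act2 : ∀ (g : G) (v : Fin S.n → ℕ), g • (Sum.inr (Quot.mk S.rel v) : ℕ ⊕ Quot S.rel) =
    Sum.inr (Quot.mk S.rel (fun i => g.1 (v i))) := fun g m => rfl
  -- supports
  have hsupp1 : ∀ x : ℕ ⊕ Quot S.rel, ∃ F : Set ℕ, F.Finite ∧
      ∀ g : G, (∀ f ∈ F, g.1 f = f) → g • x = x := by
    intro x
    rcases x with m | x
    · exact ⟨{m}, Set.finite_singleton m, fun g hg => by rw [act1, hg m rfl]⟩
    · obtain ⟨v, rfl⟩ := Quot.exists_rep x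
      refine ⟨Set.range v, Set.finite_range v, fun g hg => ?_⟩
      rw [act2]
      congr 2
      ext i
      exact hg _ ⟨i, rfl⟩
  have hsupp : ∀ A : Set (ℕ ⊕ Quot S.rel), A.Finite → ∃ F : Set ℕ, F.Finite ∧
      ∀ g : G, (∀ f ∈ F, g.1 f = f) → ∀ x ∈ A, g • x = x := by
    intro A hA
    choose F hF1 hF2 using hsupp1
    exact ⟨⋃ x ∈ A, F x, hA.biUnion fun x _ => hF1 x, fun g hg x hx =>
      hF2 x g fun f hf => hg f (Set.mem_biUnion hx hf)⟩
  have horb : ∀ F : Set ℕ, F.Finite → ∃ R : Set (ℕ ⊕ Quot S.rel), R.Finite ∧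
      ∀ y, ∃ x ∈ R, ∃ g : G, (∀ f ∈ F, g.1 f = f) ∧ g • x = y := by
    intro F hF
    obtain ⟨R1, hR1, h1⟩ := finite_orbits_over hcat Unit F hF
    obtain ⟨R2, hR2, h2⟩ := finite_orbits_over hcat (Fin S.n) F hF
    refine ⟨(fun v => Sum.inl (v ())) '' R1 ∪ (fun v => Sum.inr (Quot.mk S.rel v)) '' R2,
      (hR1.image _).union (hR2.image _), fun y => ?_⟩
    rcases y with m | y
    · obtain ⟨v, hv, e, he1, he2⟩ := h1 (fun _ => m)
      obtain ⟨g, hg⟩ := hG2 e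
      refine ⟨_, Or.inl ⟨v, hv, rfl⟩, g, fun f hf => by rw [hg, he1 f hf], ?_⟩
      rw [act1, hg, he2]
    · obtain ⟨w, rfl⟩ := Quot.exists_rep y
      obtain ⟨v, hv, e, he1, he2⟩ := h2 w
      obtain ⟨g, hg⟩ := hG2 e
      refine ⟨_, Or.inr ⟨v, hv, rfl⟩, g, fun f hf => by rw [hg, he1 f hf], ?_⟩
      rw [act2]
      congr 2
      ext i
      rw [hg, he2]
  have hfin : ∀ A : Set (ℕ ⊕ Quot S.rel), A.Finite → (gcl G A).Finite := by
    intro A hA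
    obtain ⟨F, hF, hFA⟩ := hsupp A hA
    obtain ⟨R, hR, hRo⟩ := horb F hF
    refine ((hR.inter_of_left (gcl G A)).biUnion
      (t := fun x => {y | ∃ g : G, (∀ a ∈ A, g • a = a) ∧ g • x = y}) (fun x hx => hx.2)).subset ?_
    intro y hy
    obtain ⟨x, hx, g, hg, rfl⟩ := hRo y
    refine Set.mem_biUnion (x := x) ⟨hx, ?_⟩ ⟨g, hFA g hg, rfl⟩
    have hy' : {y | ∃ k : G, (∀ a ∈ A, k • a = a) ∧ k • g • x = y}.Finite := hy
    refine Set.Finite.subset hy' ?_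
    rintro z ⟨k, hk, rfl⟩
    refine ⟨k * g⁻¹, fun a ha => ?_, by simp [mul_smul]⟩
    have : g⁻¹ • a = a := by
      rw [inv_smul_eq_iff, hFA g hg a ha]
    rw [mul_smul, this, hk a ha]
  have hDi : ∀ (g : G) (v : Fin S.n → ℕ), v ∈ D → (fun i => g.1 (v i)) ∈ D := by
    intro g v hv
    obtain ⟨e, he⟩ := hG1 g
    have := definable_inv hDdef e v hv
    simpa [he] using this
  let Q : Set (ℕ ⊕ Quot S.rel) := Sum.inr '' (S.classesOf D)
  have hQi : ∀ (g : G) (x : ℕ ⊕ Quot S.rel), x ∈ Q → g • x ∈ Q := by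
    rintro g _ ⟨_, ⟨v, hv, rfl⟩, rfl⟩
    exact ⟨_, ⟨_, hDi g v hv, rfl⟩, rfl⟩
  have hcof : ∀ A : Set (ℕ ⊕ Quot S.rel), A.Finite → ∀ x ∈ Q, x ∉ gcl G A →
      (S.classesOf (D \ {v | ∃ g : G, (∀ a ∈ A, g • a = a) ∧
        g • x = Sum.inr (Quot.mk S.rel v)})).Finite := by
    intro A hA x hxQ hx
    obtain ⟨F, hF, hFA⟩ := hsupp A hA
    have := hF.to_subtype
    set O : Set (Fin S.n → ℕ) := {v | ∃ g : G, (∀ a ∈ A, g • a = a) ∧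
        g • x = Sum.inr (Quot.mk S.rel v)} with hO
    have hOinv : S.Invariant O := by
      intro v w hvw
      have : Quot.mk S.rel v = Quot.mk S.rel w := Quot.sound hvw
      simp only [hO, Set.mem_ofPred_eq, this]
    have hOdef : (Set.univ : Set ℕ).Definable L O := by
      refine Set.Definable.mono (A := F) ?_ (Set.subset_univ F)
      rw [Set.definable_iff_exists_formula_sum]
      have hP := definable_of_invariant hcat (F ⊕ Fin S.n)
        {u | ∃ v ∈ O, ∃ e : ℕ ≃[L] ℕ, ∀ i, u i = e (Sum.elim (fun f : F => (f : ℕ)) v i)}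
        (by
          rintro e u ⟨v, hv, e', he'⟩
          exact ⟨v, hv, e.comp e', fun i => by
            show e (u i) = _
            rw [he', Language.Equiv.comp_apply]⟩)
      rw [Set.empty_definable_iff] at hP
      obtain ⟨φ, hφ⟩ := hP
      refine ⟨φ, ?_⟩
      ext v
      have : φ.Realize (Sum.elim (fun f : F => (f : ℕ)) v) ↔
          (Sum.elim (fun f : F => (f : ℕ)) v) ∈ Set.ofPred φ.Realize := Iff.rfl
      simp only [Set.mem_ofPred_eq]
      rw [this, ← hφ]
      constructor
      · intro hv
        exact ⟨v, hv, Language.Equiv.refl L ℕ, fun i => rfl⟩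
      · rintro ⟨w, ⟨g, hg, hgx⟩, e, he⟩
        obtain ⟨k, hk⟩ := hG2 e
        have hkF : ∀ f ∈ F, k.1 f = f := fun f hf => by
          rw [hk]
          exact (he (Sum.inl ⟨f, hf⟩)).symm
        refine ⟨k * g, fun a ha => ?_, ?_⟩
        · rw [mul_smul, hg a ha, hFA k hkF a ha]
        · rw [mul_smul, hgx, act2]
          congr 2
          ext i
          rw [hk]
          exact (he (Sum.inr i)).symm
    rcases hDsm O hOinv hOdef with h | h
    · exfalso
      apply hx
      refine Set.Finite.subset (h.image Sum.inr) ?_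
      rintro y ⟨g, hg, rfl⟩
      obtain ⟨_, ⟨v, hv, rfl⟩, h⟩ := hQi g x hxQ
      exact ⟨_, ⟨v, ⟨⟨g, hg, h.symm⟩, hv⟩, rfl⟩, h⟩
    · exact h
  have hQ : ∀ A : Set (ℕ ⊕ Quot S.rel), A.Finite → ∀ x ∈ Q, ∀ y ∈ Q, x ∉ gcl G A →
      y ∉ gcl G A → ∃ g : G, (∀ a ∈ A, g • a = a) ∧ g • x = y := by
    intro A hA x hx y hy hxA hyA
    have h1 := hcof A hA x hx hxA
    have h2 := hcof A hA y hy hyA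
    by_contra hne
    apply hDinf
    refine (h1.union h2).subset ?_
    rintro _ ⟨v, hv, rfl⟩
    by_contra hv2
    simp only [Set.mem_union, not_or] at hv2
    obtain ⟨h3, h4⟩ := hv2
    have h5 : ∃ g : G, (∀ a ∈ A, g • a = a) ∧ g • x = Sum.inr (Quot.mk S.rel v) := by
      by_contra h
      exact h3 ⟨v, ⟨hv, h⟩, rfl⟩
    have h6 : ∃ g : G, (∀ a ∈ A, g • a = a) ∧ g • y = Sum.inr (Quot.mk S.rel v) := by
      by_contra h
      exact h4 ⟨v, ⟨hv, h⟩, rfl⟩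
    obtain ⟨g, hg, hgx⟩ := h5
    obtain ⟨k, hk, hky⟩ := h6
    refine hne ⟨k⁻¹ * g, fun a ha => ?_, ?_⟩
    · rw [mul_smul, hg a ha, inv_smul_eq_iff, hk a ha]
    · rw [mul_smul, hgx, inv_smul_eq_iff, hky]
  have hbase : ∀ m : ℕ, ∃ B : Set (ℕ ⊕ Quot S.rel), B.Finite ∧ B ⊆ Q ∧
      (Sum.inl m : ℕ ⊕ Quot S.rel) ∈ gcl G B := by
    intro m
    obtain ⟨k, φ, p, hpD, hpinv, hm, hf⟩ := hacl m
    refine ⟨Set.range fun j => Sum.inr (Quot.mk S.rel (p j)), Set.finite_range _, ?_, ?_⟩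
    · rintro _ ⟨j, rfl⟩
      exact ⟨_, ⟨_, hpD j, rfl⟩, rfl⟩
    · refine Set.Finite.subset (hf.image Sum.inl) ?_
      rintro _ ⟨g, hg, rfl⟩
      refine ⟨g.1 m, ?_, (act1 g m).symm⟩
      obtain ⟨e, he⟩ := hG1 g
      have hrel : ∀ j, S.rel (p j) (fun i => g.1 (p j i)) := by
        intro j
        have := hg _ ⟨j, rfl⟩
        rw [act2] at this
        exact S.equiv.symm (rel_of_mk S (Sum.inr_injective this))
      have := (StrongHomClass.realize_formula e φ).2 hm
      refine (hpinv _ hrel (g.1 m)).2 ?_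
      unfold realizeWithParams
      convert this using 1
      ext i
      rcases i with i | i <;> simp [he]
  apply amenable_of
  intro A
  choose B hB1 hB2 hB3 using hbase
  have hX : (⋃ m ∈ A, B m).Finite := A.finite_toSet.biUnion fun m _ => hB1 m
  have hXQ : (⋃ m ∈ A, B m) ⊆ Q := Set.iUnion₂_subset fun m _ => hB2 m
  set X := ⋃ m ∈ A, B m with hXdef
  have hYf : (Sum.inl ⁻¹' gcl G X : Set ℕ).Finite := (hfin X hX).preimage Sum.inl_injective.injOn
  have hYm : ∀ m, m ∈ hYf.toFinset ↔ (Sum.inl m : ℕ ⊕ Quot S.rel) ∈ gcl G X := fun m => by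
    rw [Set.Finite.mem_toFinset]; rfl
  refine ⟨hYf.toFinset, fun m hm => ?_, fun C hC g hg => ?_⟩
  · rw [hYm]
    exact gcl_mono (Set.subset_biUnion_of_mem (u := B) (show m ∈ (A : Set ℕ) from hm)) (hB3 m)
  · obtain ⟨k, hk1, hk2⟩ := homog hfin Q hQi hQ X hX hXQ _ (Sum.inl '' C) g rfl
      (by
        rintro _ ⟨m, hm, rfl⟩
        exact (hYm m).1 (hC hm))
      (by
        rintro _ ⟨m, hm, rfl⟩
        exact (hYm _).1 (hg m hm))
    refine ⟨k, fun y hy => ?_, fun b hb => ?_⟩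
    · exact (hYm _).2 (hk1 _ ((hYm y).1 hy))
    · exact Sum.inl_injective (hk2 _ ⟨b, hb, rfl⟩)


/-- A countable totally categorical structure lying in the algebraic closure of a
`0`-definable modular strictly minimal set `D` (in `M^eq`) has amenable automorphism
group. -/
theorem statement11 (L : FirstOrder.Language.{0, 0}) [L.IsRelational]
    [inst : L.Structure ℕ] (hL : Countable (Σ n, L.Relations n))
    (htc : TotallyCategorical L ℕ)
    (S : ImagSort L ℕ) (D : Set (Fin S.n → ℕ))
    (hmin : ImStrictlyMinimal S D) (hmod : ImModularOn S D)
    (hacl : ∀ a : ℕ, a ∈ realAclOverIm S D) :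
    AmenableGroup ↥(autGroup (ofStructure inst)) := by

  have hcnt : Countable L.Symbols := by
    have h1 : Countable (Σ n, L.Relations n) := hL
    have h2 : IsEmpty (Σ n, L.Functions n) := ⟨fun p => isEmptyElim p.2⟩
    exact (inferInstance : Countable ((Σ n, L.Functions n) ⊕ (Σ n, L.Relations n)))
  have hrel : ∀ (g : ↥(autGroup (ofStructure inst))) (n : ℕ) (R : L.Relations n) (t : Fin n → ℕ),
      Structure.RelMap R (fun i => g.1.symm (t i)) ↔ Structure.RelMap R t := by
    intro g n R t
    have h : permSMul g.1 (ofStructure inst) = ofStructure inst := g.2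
    have h2 := congrFun (congrFun (congrFun h n) R) t
    simpa [permSMul, ofStructure] using h2
  refine main_amenable (htc Cardinal.aleph0 le_rfl) S D hmin hacl _ (fun g => ?_) (fun e => ?_)
  · refine ⟨⟨g.1, fun {n} F => isEmptyElim F, fun {n} R x => ?_⟩, fun x => rfl⟩
    have := hrel g n R (g.1 ∘ x)
    simpa [Function.comp_def] using this.symm
  · refine ⟨⟨e.toEquiv, ?_⟩, fun x => rfl⟩
    show permSMul e.toEquiv (ofStructure inst) = ofStructure inst
    funext n R t
    simp only [permSMul, ofStructure]
    have := e.symm.map_rel R t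
    have h3 : (fun i => e.toEquiv.symm (t i)) = e.symm ∘ t := rfl
    rw [h3]
    simp [this]

end Paper
end

section
/- Let M be the Fraïssé limit of a Fraïssé class K, equipped with a freeness relation P which satisfies JN-amalgamation. If the class K satisfies the Ramsey property, then for every strict free sequence ā = a₁,…,a_k from M, the type of ā is the same for all permutations of ā. -/
open FirstOrder FirstOrder.Language CategoryTheory Set

universe u v

namespace Paper


variable {L : FirstOrder.Language.{u, v}}

variable {L : FirstOrder.Language.{u, v}}

/-- A tuple realizes a (not necessarily complete) type over `∅`. -/
def RealizesType (L : FirstOrder.Language.{0, 0}) (M : Type) [L.Structure M] {n : ℕ}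
    (a : Fin n → M) (t : Set (L.Formula (Fin n))) : Prop :=
  ∀ φ ∈ t, φ.Realize a

/-- A sequence is free (w.r.t. the family of types `P`) if it realizes a type from `P`. -/
def IsFreeSeq (L : FirstOrder.Language.{0, 0}) (M : Type) [L.Structure M]
    (P : ∀ n : ℕ, Set (Set (L.Formula (Fin n)))) {n : ℕ} (a : Fin n → M) : Prop :=
  ∃ t ∈ P n, RealizesType L M a t

/-- Two tuples have the same (complete) type over `∅`. -/
def SameType (L : FirstOrder.Language.{0, 0}) (M : Type) [L.Structure M] {n : ℕ}
    (a b : Fin n → M) : Prop :=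
  ∀ φ : L.Formula (Fin n), φ.Realize a ↔ φ.Realize b

/-- `P` is a freeness relation on `M` : a family of types over `∅` containing `n`-types
for all `n ≥ 1`, closed under permutations of variables, such that any free sequence
can be extended by a quantifier-free copy of any other free sequence to a free
sequence. -/
def IsFreenessRelation (L : FirstOrder.Language.{0, 0}) (M : Type) [L.Structure M]
    (P : ∀ n : ℕ, Set (Set (L.Formula (Fin n)))) : Prop :=
  (∀ n : ℕ, 0 < n → (P n).Nonempty) ∧
    (∀ (n : ℕ) (t : Set (L.Formula (Fin n))), t ∈ P n → ∀ σ : Equiv.Perm (Fin n),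
      (fun φ : L.Formula (Fin n) => φ.relabel σ) '' t ∈ P n) ∧
    ∀ (n k : ℕ) (a : Fin n → M) (b : Fin k → M),
      IsFreeSeq L M P a → IsFreeSeq L M P b →
      ∃ a' : Fin k → M, IsFreeSeq L M P (Fin.append a a') ∧
        ∀ φ : L.Formula (Fin k), φ.IsQF → (φ.Realize a' ↔ φ.Realize b)

/-- `r` is a (strict) linear ordering of the set `U`. -/
def IsLinearOrderOn {M : Type} (r : M → M → Prop) (U : Set M) : Prop :=
  (∀ x ∈ U, ¬r x x) ∧
    (∀ x ∈ U, ∀ y ∈ U, ∀ z ∈ U, r x y → r y z → r x z) ∧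
    ∀ x ∈ U, ∀ y ∈ U, x ≠ y → r x y ∨ r y x

/-- The freeness relation `P` on `M` satisfies JN-amalgamation : every free sequence
`ā` admits a finite family `F` of tuples of the same type as `ā`, no two distinct
members of which share a pair of elements, such that every linear ordering of `∪F`
enumerates some member of `F`. -/
def HasJNAmalgamation (L : FirstOrder.Language.{0, 0}) (M : Type) [L.Structure M]
    (P : ∀ n : ℕ, Set (Set (L.Formula (Fin n)))) : Prop :=
  ∀ (k : ℕ) (a : Fin k → M), IsFreeSeq L M P a →
    ∃ F : Finset (Fin k → M),
      (∀ c ∈ F, SameType L M c a) ∧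
      (∀ c₁ ∈ F, ∀ c₂ ∈ F, c₁ ≠ c₂ → (Set.range c₁ ∩ Set.range c₂).Subsingleton) ∧
      ∀ r : M → M → Prop, IsLinearOrderOn r (⋃ c ∈ F, Set.range c) →
        ∃ c ∈ F, ∀ i j : Fin k, i < j → r (c i) (c j)

/-- A free sequence `ā` is strict in `M` : every finite subset of `M` carries a linear
order `r` such that for any two tuples of the same type as `ā` generating the same
substructure, the `r`-preserving map between them is elementary. -/
def IsStrictSeq (L : FirstOrder.Language.{0, 0}) (M : Type) [L.Structure M]
    (P : ∀ n : ℕ, Set (Set (L.Formula (Fin n)))) {k : ℕ} (a : Fin k → M) : Prop :=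
  IsFreeSeq L M P a ∧
    ∀ s : Set M, s.Finite →
      ∃ r : M → M → Prop, IsLinearOrderOn r s ∧
        ∀ c₁ c₂ : Fin k → M, Set.range c₁ ⊆ s → Set.range c₂ ⊆ s →
          SameType L M c₁ a → SameType L M c₂ a →
          Substructure.closure L (Set.range c₁) = Substructure.closure L (Set.range c₂) →
          ∀ σ τ : Equiv.Perm (Fin k),
            (∀ i j : Fin k, i < j → r (c₁ (σ i)) (c₁ (σ j))) →
            (∀ i j : Fin k, i < j → r (c₂ (τ i)) (c₂ (τ j))) →
            SameType L M (c₁ ∘ σ) (c₂ ∘ τ)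

theorem sameType_exists_aut {L : FirstOrder.Language.{0, 0}} {M : Type} [L.Structure M]
    (hU : L.IsUltrahomogeneous M) {k : ℕ} (a b : Fin k → M) (h : SameType L M a b) :
    ∃ g : M ≃[L] M, ∀ i, g (a i) = b i := by
  have hterm : ∀ x : Substructure.closure L (Set.range a), ∃ t : L.Term (Fin k),
      t.realize a = x.1 := by
    rintro ⟨x, hx⟩
    obtain ⟨t, rfl⟩ := Substructure.mem_closure_iff_exists_term.1 hx
    choose f hf using fun y : Set.range a => y.2
    refine ⟨t.relabel f, ?_⟩
    rw [Term.realize_relabel]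
    congr 1
    funext y
    exact hf y
  choose T hT using hterm
  have heq : ∀ t₁ t₂ : L.Term (Fin k), t₁.realize a = t₂.realize a ↔
      t₁.realize b = t₂.realize b := by
    intro t₁ t₂
    have := h (t₁.equal t₂)
    simpa only [Formula.realize_equal] using this
  let f : Substructure.closure L (Set.range a) ↪[L] M :=
    { toFun := fun x => (T x).realize b
      inj' := by
        intro x y hxy
        have := (heq _ _).2 hxy
        rw [hT, hT] at this
        exact Subtype.ext this
      map_fun' := by
        intro n F x
        have : (T (Structure.funMap F x)).realize b
            = (Term.func F (fun i => T (x i))).realize b := by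
          rw [← heq, hT, Term.realize_func]
          simp only [hT]
          rfl
        rw [this, Term.realize_func]
        rfl
      map_rel' := by
        intro n R x
        have := h (R.formula (fun i => T (x i)))
        rw [Formula.realize_rel, Formula.realize_rel] at this
        simp only [hT] at this
        exact this.symm }
  obtain ⟨g, hg⟩ := hU _ (Substructure.fg_closure (Set.finite_range a)) f
  refine ⟨g, fun i => ?_⟩
  have hm : a i ∈ Substructure.closure L (Set.range a) :=
    Substructure.subset_closure ⟨i, rfl⟩
  have h1 : f ⟨a i, hm⟩ = g (a i) := by rw [hg]; rfl
  rw [← h1]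
  have := (heq (T ⟨a i, hm⟩) (Term.var i)).1 (by rw [hT]; rfl)
  exact this

theorem sameType_aut {L : FirstOrder.Language.{0, 0}} {M : Type} [L.Structure M]
    {k : ℕ} (a : Fin k → M) (g : M ≃[L] M) : SameType L M (fun i => g (a i)) a := by
  intro φ
  exact StrongHomClass.realize_formula g φ

theorem SameType.comp_perm {L : FirstOrder.Language.{0, 0}} {M : Type} [L.Structure M]
    {k : ℕ} {a b : Fin k → M} (h : SameType L M a b) (σ : Equiv.Perm (Fin k)) :
    SameType L M (a ∘ σ) (b ∘ σ) := by
  intro φ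
  rw [← Formula.realize_relabel, ← Formula.realize_relabel]
  exact h _

theorem strict_global {L : FirstOrder.Language.{0, 0}} {M : Type} [L.Structure M]
    {P : ∀ n : ℕ, Set (Set (L.Formula (Fin n)))} {k : ℕ} {a : Fin k → M}
    (h : IsStrictSeq L M P a) :
    ∃ r : M → M → Prop, IsLinearOrderOn r Set.univ ∧
        ∀ c₁ c₂ : Fin k → M,
          SameType L M c₁ a → SameType L M c₂ a →
          Substructure.closure L (Set.range c₁) = Substructure.closure L (Set.range c₂) →
          ∀ σ τ : Equiv.Perm (Fin k),
            (∀ i j : Fin k, i < j → r (c₁ (σ i)) (c₁ (σ j))) →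
            (∀ i j : Fin k, i < j → r (c₂ (τ i)) (c₂ (τ j))) →
            SameType L M (c₁ ∘ σ) (c₂ ∘ τ) := by
  classical
  choose R hlin hR using fun s : Finset M => h.2 (s : Set M) s.finite_toSet
  let U : Ultrafilter (Finset M) := Ultrafilter.of Filter.atTop
  have hU : (U : Filter (Finset M)) ≤ Filter.atTop := Ultrafilter.of_le _
  have hmem : ∀ x : M, ∀ᶠ s in (U : Filter (Finset M)), x ∈ s := fun x =>
    hU ((Filter.eventually_ge_atTop ({x} : Finset M)).mono fun s hs => by simpa using hs)
  refine ⟨fun x y => ∀ᶠ s in (U : Filter (Finset M)), R s x y, ⟨?_, ?_, ?_⟩, ?_⟩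
  · intro x _ hx
    obtain ⟨s, h1, h2⟩ := (hx.and (hmem x)).exists
    exact (hlin s).1 x h2 h1
  · intro x _ y _ z _ hxy hyz
    filter_upwards [hxy, hyz, hmem x, hmem y, hmem z] with s h1 h2 h3 h4 h5
    exact (hlin s).2.1 x h3 y h4 z h5 h1 h2
  · intro x _ y _ hne
    rw [← Ultrafilter.eventually_or]
    filter_upwards [hmem x, hmem y] with s h3 h4
    exact (hlin s).2.2 x h3 y h4 hne
  · intro c₁ c₂ h1 h2 hcl σ τ hσ hτ
    have e1 : ∀ᶠ s in (U : Filter (Finset M)), ∀ i, c₁ i ∈ s :=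
      Filter.eventually_all.2 fun i => hmem _
    have e2 : ∀ᶠ s in (U : Filter (Finset M)), ∀ i, c₂ i ∈ s :=
      Filter.eventually_all.2 fun i => hmem _
    have e3 : ∀ᶠ s in (U : Filter (Finset M)), ∀ i j, i < j → R s (c₁ (σ i)) (c₁ (σ j)) :=
      Filter.eventually_all.2 fun i => Filter.eventually_all.2 fun j =>
        Filter.eventually_all.2 fun hij => hσ i j hij
    have e4 : ∀ᶠ s in (U : Filter (Finset M)), ∀ i j, i < j → R s (c₂ (τ i)) (c₂ (τ j)) :=
      Filter.eventually_all.2 fun i => Filter.eventually_all.2 fun j =>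
        Filter.eventually_all.2 fun hij => hτ i j hij
    obtain ⟨s, ⟨⟨h3, h4⟩, h5⟩, h6⟩ := (((e1.and e2).and e3).and e4).exists
    exact hR s c₁ c₂ (Set.range_subset_iff.2 h3) (Set.range_subset_iff.2 h4) h1 h2 hcl σ τ h5 h6

theorem isFreeSeq_perm {L : FirstOrder.Language.{0, 0}} {M : Type} [L.Structure M]
    {P : ∀ n : ℕ, Set (Set (L.Formula (Fin n)))} (hP : IsFreenessRelation L M P)
    {k : ℕ} {a : Fin k → M} (h : IsFreeSeq L M P a) (σ : Equiv.Perm (Fin k)) :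
    IsFreeSeq L M P (a ∘ σ) := by
  obtain ⟨t, ht, hr⟩ := h
  refine ⟨_, hP.2.1 k t ht σ⁻¹, ?_⟩
  rintro _ ⟨φ, hφ, rfl⟩
  refine Formula.realize_relabel.2 ?_
  have : (a ∘ σ) ∘ (σ⁻¹ : Equiv.Perm (Fin k)) = a := by
    funext i; simp
  rw [this]
  exact hr φ hφ

theorem closure_equiv {L : FirstOrder.Language.{0, 0}} {M : Type} [L.Structure M]
    (hU : L.IsUltrahomogeneous M) {k : ℕ} (a b : Fin k → M) (h : SameType L M a b) :
    Nonempty (Substructure.closure L (Set.range a) ≃[L] Substructure.closure L (Set.range b)) := by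
  obtain ⟨g, hg⟩ := sameType_exists_aut hU a b h
  have : (Substructure.closure L (Set.range a)).map g.toEmbedding.toHom
      = Substructure.closure L (Set.range b) := by
    rw [Substructure.map_closure, ← Set.range_comp]
    congr 2
    funext i
    exact hg i
  rw [← this]
  exact ⟨g.toEmbedding.substructureEquivMap _⟩

/-- Theorem 3.4: if the Fraïssé class `K` of a Fraïssé limit `M` equipped with a
freeness relation `P` satisfying JN-amalgamation has the Ramsey property, then the type
of any strict free sequence is invariant under all permutations of the sequence. -/
theorem statement13 (L : FirstOrder.Language.{0, 0})
    [Countable (Σ l, L.Functions l)] (hLrel : Countable (Σ n, L.Relations n))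
    (K : Set (Bundled.{0} L.Structure)) (M : Type) [L.Structure M] [Countable M]
    (hlim : IsFraisseLimit K M)
    (P : ∀ n : ℕ, Set (Set (L.Formula (Fin n))))
    (hP : IsFreenessRelation L M P)
    (hJN : HasJNAmalgamation L M P)
    (hRam : RamseyProperty K)
    (k : ℕ) (a : Fin k → M) (hstrict : IsStrictSeq L M P a) :
    ∀ σ : Equiv.Perm (Fin k), SameType L M a (a ∘ σ) := by
  intro σ
  have hU := hlim.ultrahomogeneous
  obtain ⟨r, hr, hstr⟩ := strict_global hstrict
  obtain ⟨F, hF1, -, hF3⟩ := hJN k a hstrict.1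
  obtain ⟨F', hF1', -, hF3'⟩ := hJN k (a ∘ σ) (isFreeSeq_perm hP hstrict.1 σ)
  have hrg : ∀ (g : M ≃[L] M) (V : Set M), IsLinearOrderOn (fun x y => r (g x) (g y)) V := by
    intro g V
    refine ⟨fun x _ => hr.1 _ (Set.mem_univ _), fun x _ y _ z _ =>
      hr.2.1 _ (Set.mem_univ _) _ (Set.mem_univ _) _ (Set.mem_univ _), fun x _ y _ hne =>
      hr.2.2 _ (Set.mem_univ _) _ (Set.mem_univ _) (fun h => hne (g.injective h))⟩
  let V : Set M := (⋃ c ∈ F, Set.range c) ∪ (⋃ c ∈ F', Set.range c)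
  have hVfin : V.Finite :=
    (F.finite_toSet.biUnion fun c _ => Set.finite_range c).union
      (F'.finite_toSet.biUnion fun c _ => Set.finite_range c)
  have hFV : ∀ c ∈ F, ∀ i, c i ∈ V := fun c hc i =>
    Or.inl (Set.mem_biUnion hc ⟨i, rfl⟩)
  have hFV' : ∀ c ∈ F', ∀ i, c i ∈ V := fun c hc i =>
    Or.inr (Set.mem_biUnion hc ⟨i, rfl⟩)
  let B := Substructure.closure L V
  let A := Substructure.closure L (Set.range a)
  have hBfg : B.FG := Substructure.fg_closure hVfin
  have hAfg : A.FG := Substructure.fg_closure (Set.finite_range a)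
  have hAK : (Bundled.of A : Bundled.{0} L.Structure) ∈ K := by
    rw [← hlim.age]
    exact ⟨(Substructure.fg_iff_structure_fg A).1 hAfg, ⟨A.subtype⟩⟩
  have hBK : (Bundled.of B : Bundled.{0} L.Structure) ∈ K := by
    rw [← hlim.age]
    exact ⟨(Substructure.fg_iff_structure_fg B).1 hBfg, ⟨B.subtype⟩⟩
  have hAB : Nonempty (A ↪[L] B) := by
    obtain ⟨c, hc, -⟩ := hF3 _ (hrg (FirstOrder.Language.Equiv.refl L M) _)
    obtain ⟨e⟩ := closure_equiv hU c a (hF1 c hc)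
    have hle : Substructure.closure L (Set.range c) ≤ B :=
      Substructure.closure_mono (Set.range_subset_iff.2 (hFV c hc))
    exact ⟨(Substructure.inclusion hle).comp e.symm.toEmbedding⟩
  obtain ⟨C₀, hC₀, hcol⟩ := hRam 1 _ hAK _ hBK hAB
  rw [← hlim.age] at hC₀
  obtain ⟨-, ⟨e⟩⟩ := hC₀
  classical
  let Q : L.Substructure C₀ → Prop := fun S => ∃ d : Fin k → M, SameType L M d a ∧
    Substructure.closure L (Set.range d) = S.map e.toHom ∧ ∀ i j, i < j → r (d i) (d j)
  obtain ⟨B', ⟨eB⟩, hmono⟩ := hcol (fun S => if Q S then 1 else 0)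
  obtain ⟨g, hg⟩ := hU B hBfg ((e.comp B'.subtype).comp eB.toEmbedding)
  have hgB : ∀ x ∈ V, g x ∈ B'.map e.toHom := by
    intro x hx
    have hxB : x ∈ B := Substructure.subset_closure hx
    have h1 : g x = e (eB ⟨x, hxB⟩ : B').1 := by
      have := congrArg (fun f : B ↪[L] M => f ⟨x, hxB⟩) hg
      exact this.symm
    rw [h1]
    exact ⟨_, (eB ⟨x, hxB⟩ : B').2, rfl⟩
  -- copies coming from tuples
  have key : ∀ c : Fin k → M, SameType L M c a → (∀ i, c i ∈ V) →
      ∃ S ∈ copies (Bundled.of A : Bundled.{0} L.Structure) (C₀ : Type), S ≤ B' ∧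
        S.map e.toHom = Substructure.closure L (Set.range fun i => g (c i)) := by
    intro c hc hcV
    set D := Substructure.closure L (Set.range fun i => g (c i)) with hD
    have hDB : D ≤ B'.map e.toHom :=
      Substructure.closure_le.2 (Set.range_subset_iff.2 fun i => hgB _ (hcV i))
    have hmap : (D.comap e.toHom).map e.toHom = D := by
      apply le_antisymm
      · rintro _ ⟨y, hy, rfl⟩; exact hy
      · intro x hx
        obtain ⟨y, -, rfl⟩ := hDB hx
        exact ⟨y, hx, rfl⟩
    refine ⟨D.comap e.toHom, ?_, ?_, hmap⟩
    · have h1 : SameType L M (fun i => g (c i)) a := fun φ => (sameType_aut c g φ).trans (hc φ)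
      obtain ⟨e1⟩ := closure_equiv hU _ _ h1
      have e2 : (D.comap e.toHom) ≃[L] D := by
        have := e.substructureEquivMap (D.comap e.toHom)
        rwa [hmap] at this
      exact ⟨(e1.comp e2).symm⟩
    · intro x hx
      obtain ⟨y, hy, hyx⟩ := hDB hx
      have : y = x := e.injective hyx
      exact this ▸ hy
  obtain ⟨c, hc, hcr⟩ := hF3 _ (hrg g _)
  obtain ⟨c', hc', hcr'⟩ := hF3' _ (hrg g _)
  have hc'a : SameType L M (c' ∘ (σ⁻¹ : Equiv.Perm (Fin k))) a := by
    have := (hF1' c' hc').comp_perm σ⁻¹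
    have h2 : (a ∘ σ) ∘ (σ⁻¹ : Equiv.Perm (Fin k)) = a := by
      funext i; simp
    rwa [h2] at this
  obtain ⟨S₁, hS₁, hS₁B, hS₁m⟩ := key c (hF1 c hc) (hFV c hc)
  obtain ⟨S₂, hS₂, hS₂B, hS₂m⟩ := key _ hc'a (fun i => hFV' c' hc' _)
  have hQ1 : Q S₁ := ⟨fun i => g (c i), fun φ => (sameType_aut c g φ).trans (hF1 c hc φ),
    hS₁m.symm, hcr⟩
  have hQ2 : Q S₂ := by
    by_contra hn
    have := hmono S₁ hS₁ S₂ hS₂ hS₁B hS₂B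
    simp [hQ1, hn] at this
  obtain ⟨d, hd, hdS, hdr⟩ := hQ2
  have hfin := hstr d (fun i => g ((c' ∘ (σ⁻¹ : Equiv.Perm (Fin k))) i)) hd
    (fun φ => (sameType_aut _ g φ).trans (hc'a φ)) (hdS.trans hS₂m) 1 σ
    (by simpa using hdr) (by simpa using hcr')
  have h3 : (fun i => g ((c' ∘ (σ⁻¹ : Equiv.Perm (Fin k))) i)) ∘ σ = fun i => g (c' i) := by
    funext i; simp
  rw [h3] at hfin
  intro φ
  exact (hd φ).symm.trans ((hfin φ).trans ((sameType_aut c' g φ).trans (hF1' c' hc' φ)))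

end Paper
end

section
/- Suppose M is a Fraïssé structure with age K₀ and M* is an expansion of M by new relation symbols whose age K*₀ = Age(M*) is a reasonable expansion of K₀. Then K_{M*} is a reasonable expansion of K_M: for any A, B ∈ K_M, any embedding f : A → B, and any expansion A* ∈ K_{M*} of A, the map f embeds A* into some expansion B* ∈ K_{M*} of B. -/
open FirstOrder FirstOrder.Language CategoryTheory Set

universe u v

namespace Paper


variable {L : FirstOrder.Language.{u, v}}

variable {L : FirstOrder.Language.{u, v}}

/-- Index type for the distance relations: rationals in `[0,1]`. -/
def DistIdx : Type := {q : ℚ // 0 ≤ q ∧ q ≤ 1}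

private def distRelTy : ℕ → Type
  | 2 => DistIdx
  | _ => Empty

/-- The language `L₀` with binary relations `d(x,y) ≤ q` for `q ∈ ℚ ∩ [0,1]`. -/
def L₀ : FirstOrder.Language.{0, 0} := ⟨fun _ => Empty, distRelTy⟩

instance : L₀.IsRelational := fun _ => inferInstanceAs (IsEmpty Empty)

private def pRelTy : ℕ → Type
  | 1 => Unit
  | _ => Empty

/-- The language with a single unary predicate `P^M`. -/
def Lp : FirstOrder.Language.{0, 0} := ⟨fun _ => Empty, pRelTy⟩

instance : Lp.IsRelational := fun _ => inferInstanceAs (IsEmpty Empty)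

/-- The language `L₀ ∪ L ∪ {P^M}` of the classes `K_M`. -/
def LM (L : FirstOrder.Language.{0, 0}) : FirstOrder.Language.{0, 0} :=
  L₀.sum (L.sum Lp)

instance (L : FirstOrder.Language.{0, 0}) [L.IsRelational] : (LM L).IsRelational :=
  inferInstanceAs (FirstOrder.Language.IsRelational (L₀.sum (L.sum Lp)))

/-- The distance relation symbols of `LM L`. -/
def distR (L : FirstOrder.Language.{0, 0}) (q : DistIdx) : (LM L).Relations 2 :=
  Sum.inl (show distRelTy 2 from q)

/-- The predicate symbol `P^M` of `LM L`. -/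
def pR (L : FirstOrder.Language.{0, 0}) : (LM L).Relations 1 :=
  Sum.inr (Sum.inr (show pRelTy 1 from ()))

/-- The symbols of `L` inside `LM L`. -/
def lR (L : FirstOrder.Language.{0, 0}) {n : ℕ} (R : L.Relations n) : (LM L).Relations n :=
  Sum.inr (Sum.inl R)

/-- The set defined by the predicate `P^M` in an `LM L`-structure. -/
def pPartSet (L : FirstOrder.Language.{0, 0}) (X : Type*) [(LM L).Structure X] : Set X :=
  {a | Structure.RelMap (pR L) ![a]}

/-- The induced `L`-structure on the `P^M`-part of an `LM L`-structure. -/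
def pPartStructure (L : FirstOrder.Language.{0, 0}) [L.IsRelational] (X : Type*)
    [(LM L).Structure X] : L.Structure ↥(pPartSet L X) where
  funMap := fun f _ => isEmptyElim f
  RelMap := fun R t => Structure.RelMap (lR L R) fun i => ((t i : X))

/-- `δ` is the (rational, diameter `≤ 1`) metric of an `LM L`-structure `X` :
it satisfies the metric axioms, is compatible with the distance relations of `X`, and
distinct elements of the `P^M`-part are at distance `1`. -/
def IsMetricOf (L : FirstOrder.Language.{0, 0}) (X : Type*) [(LM L).Structure X]
    (δ : X → X → ℚ) : Prop :=
  (∀ x y, 0 ≤ δ x y ∧ δ x y ≤ 1) ∧ (∀ x y, δ x y = 0 ↔ x = y) ∧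
    (∀ x y, δ x y = δ y x) ∧ (∀ x y z, δ x z ≤ δ x y + δ y z) ∧
    (∀ (q : DistIdx) (x y : X), Structure.RelMap (distR L q) ![x, y] ↔ δ x y ≤ q.1) ∧
    ∀ a b : ↥(pPartSet L X), a ≠ b → δ (a : X) (b : X) = 1

/-- The class `K_M` : finite `LM L`-structures which are rational metric spaces of
diameter `≤ 1`, in which distinct elements of `P^M` are at distance `1` and the
`P^M`-part carries an `L`-structure belonging to `K`. -/
def KMclass (L : FirstOrder.Language.{0, 0}) [L.IsRelational]
    (K : Set (Bundled.{0} L.Structure)) : Set (Bundled.{0} (LM L).Structure) :=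
  {F | Finite F ∧ (∃ δ : F → F → ℚ, IsMetricOf L F δ) ∧
    (⟨↥(pPartSet L F), pPartStructure L F⟩ : Bundled.{0} L.Structure) ∈ K}

/-- The subclass `C_M ⊆ K_M` of structures whose `P^M`-part lies in `C₀`. -/
def CMclass (L : FirstOrder.Language.{0, 0}) [L.IsRelational]
    (K C : Set (Bundled.{0} L.Structure)) : Set (Bundled.{0} (LM L).Structure) :=
  {F | F ∈ KMclass L K ∧
    (⟨↥(pPartSet L F), pPartStructure L F⟩ : Bundled.{0} L.Structure) ∈ C}

variable {Λ₁ Λ₂ : FirstOrder.Language.{0, 0}}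

/-- `K'` is a reasonable expansion of `K` (along the language inclusion `φ`): for all
`A, B ∈ K`, every embedding `f : A → B`, and every expansion `A* ∈ K'` of `A`, the map
`f` embeds `A*` into some expansion `B* ∈ K'` of `B`. -/
def ReasonableExpansion (φ : Λ₁ →ᴸ Λ₂) (K : Set (Bundled.{0} Λ₁.Structure))
    (K' : Set (Bundled.{0} Λ₂.Structure)) : Prop :=
  ∀ A B : Bundled.{0} Λ₁.Structure, A ∈ K → B ∈ K → ∀ f : A ↪[Λ₁] B,
    ∀ SA : Λ₂.Structure A.α,
      @FirstOrder.Language.LHom.reduct Λ₁ Λ₂ φ A.α SA = A.str →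
      (⟨A.α, SA⟩ : Bundled.{0} Λ₂.Structure) ∈ K' →
      ∃ SB : Λ₂.Structure B.α,
        @FirstOrder.Language.LHom.reduct Λ₁ Λ₂ φ B.α SB = B.str ∧
        (⟨B.α, SB⟩ : Bundled.{0} Λ₂.Structure) ∈ K' ∧
        ∃ g : (⟨A.α, SA⟩ : Bundled.{0} Λ₂.Structure) ↪[Λ₂]
            (⟨B.α, SB⟩ : Bundled.{0} Λ₂.Structure),
          ∀ a : A, g a = f a

/-- `K'` has the expansion property with respect to `K`: every `A' ∈ K'` embeds into
every expansion in `K'` of some `B ∈ K`. -/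
def ExpansionProperty (φ : Λ₁ →ᴸ Λ₂) (K : Set (Bundled.{0} Λ₁.Structure))
    (K' : Set (Bundled.{0} Λ₂.Structure)) : Prop :=
  ∀ A' ∈ K', ∃ B ∈ K, ∀ SB : Λ₂.Structure B.α,
    @FirstOrder.Language.LHom.reduct Λ₁ Λ₂ φ B.α SB = B.str →
    (⟨B.α, SB⟩ : Bundled.{0} Λ₂.Structure) ∈ K' →
    Nonempty (A' ↪[Λ₂] (⟨B.α, SB⟩ : Bundled.{0} Λ₂.Structure))

/-- The expansion is precompact : every member of `K` has only finitely many
expansions in `K'`. -/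
def PrecompactPair (φ : Λ₁ →ᴸ Λ₂) (K : Set (Bundled.{0} Λ₁.Structure))
    (K' : Set (Bundled.{0} Λ₂.Structure)) : Prop :=
  ∀ A ∈ K, {S : Λ₂.Structure A.α |
    @FirstOrder.Language.LHom.reduct Λ₁ Λ₂ φ A.α S = A.str ∧
      (⟨A.α, S⟩ : Bundled.{0} Λ₂.Structure) ∈ K'}.Finite

theorem struct_ext {Λ : FirstOrder.Language.{0, 0}} [Λ.IsRelational] {X : Type}
    {S T : Λ.Structure X}
    (h : ∀ (n : ℕ) (R : Λ.Relations n) (t : Fin n → X),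
      @Structure.RelMap Λ X S n R t ↔ @Structure.RelMap Λ X T n R t) : S = T := by
  apply FirstOrder.Language.Structure.ext
  · funext n F
    exact isEmptyElim F
  · funext n R t
    exact propext (h n R t)

/-- An embedding restricts to the `P`-parts. -/
def pRestrict (L : FirstOrder.Language.{0, 0}) [L.IsRelational]
    (A B : Type) [(LM L).Structure A] [(LM L).Structure B] (f : A ↪[LM L] B) :
    @FirstOrder.Language.Embedding L ↥(pPartSet L A) ↥(pPartSet L B)
      (pPartStructure L A) (pPartStructure L B) :=
  letI := pPartStructure L A
  letI := pPartStructure L B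
  { toFun := fun a => ⟨f a.1, by
      have h := (f.map_rel (pR L) ![a.1]).2 a.2
      have e : (⇑f ∘ ![a.1]) = ![f a.1] := by
        funext i; fin_cases i; rfl
      rw [e] at h
      exact h⟩
    inj' := fun a b h => Subtype.ext (f.injective (congrArg Subtype.val h))
    map_fun' := fun F _ => isEmptyElim F
    map_rel' := fun R t => f.map_rel (lR L R) (fun i => (t i).1) }

theorem mem_pPart_iff (L : FirstOrder.Language.{0, 0})
    (A B : Type) [(LM L).Structure A] [(LM L).Structure B] (f : A ↪[LM L] B) (a : A) :
    f a ∈ pPartSet L B ↔ a ∈ pPartSet L A := by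
  have h := f.map_rel (pR L) ![a]
  have e : (⇑f ∘ ![a]) = ![f a] := by
    funext i; fin_cases i; rfl
  rw [e] at h
  exact h

/-- The expansion of `B` determined by an expansion of its `P`-part and by relations `W`
on the remaining tuples. -/
def bigExp (L L' : FirstOrder.Language.{0, 0}) [L.IsRelational] [L'.IsRelational]
    (B : Type) [iB : (LM L).Structure B] (S₀ : (L.sum L').Structure ↥(pPartSet L B))
    (W : ∀ n : ℕ, L'.Relations n → (Fin n → B) → Prop) :
    (LM (L.sum L')).Structure B where
  funMap := fun F _ => isEmptyElim F
  RelMap := fun {n} R t => match R with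
    | Sum.inl q => @Structure.RelMap (LM L) B iB n (Sum.inl q) t
    | Sum.inr (Sum.inr p) => @Structure.RelMap (LM L) B iB n (Sum.inr (Sum.inr p)) t
    | Sum.inr (Sum.inl (Sum.inl R)) =>
        @Structure.RelMap (LM L) B iB n (Sum.inr (Sum.inl R)) t
    | Sum.inr (Sum.inl (Sum.inr R)) =>
        (∃ h : ∀ i, t i ∈ pPartSet L B,
          @Structure.RelMap (L.sum L') _ S₀ n (Sum.inr R) (fun i => ⟨t i, h i⟩)) ∨
        ((¬ ∀ i, t i ∈ pPartSet L B) ∧ W n R t)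

/-- If `Age(M*)` is a reasonable expansion of `Age(M) = K₀`, then `K_{M*}` is a
reasonable expansion of `K_M`. -/
theorem statement16 (L L' : FirstOrder.Language.{0, 0}) [L.IsRelational] [L'.IsRelational]
    (hL : Countable (Σ n, L.Relations n)) (hL' : Countable (Σ n, L'.Relations n))
    [inst : L.Structure ℕ] [instx : (L.sum L').Structure ℕ]
    (hexp : (LHom.sumInl : L →ᴸ L.sum L').reduct ℕ = inst)
    (hM : IsFraisseLimit (FirstOrder.Language.age L ℕ) ℕ)
    (hreas : ReasonableExpansion (LHom.sumInl : L →ᴸ L.sum L')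
      (FirstOrder.Language.age L ℕ) (FirstOrder.Language.age (L.sum L') ℕ)) :
    ReasonableExpansion
      ((LHom.id L₀).sumMap ((LHom.sumInl : L →ᴸ L.sum L').sumMap (LHom.id Lp)))
      (KMclass L (FirstOrder.Language.age L ℕ))
      (KMclass (L.sum L') (FirstOrder.Language.age (L.sum L') ℕ)) := by
  rintro ⟨A, SA₁⟩ ⟨B, iB⟩ hA hB f₀ SA hSA hA'
  change (LM L).Structure B at iB
  change (LM (L.sum L')).Structure A at SA
  change @LHom.reduct _ _ _ A SA = SA₁ at hSA
  subst hSA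
  let iA : (LM L).Structure A :=
    @FirstOrder.Language.LHom.reduct _ _ ((LHom.id L₀).sumMap
      ((LHom.sumInl : L →ᴸ L.sum L').sumMap (LHom.id Lp))) A SA
  let f : @FirstOrder.Language.Embedding (LM L) A B iA iB := f₀
  obtain ⟨S₀, hS₀, hS₀K, g₀, hg₀⟩ := hreas
    ⟨↥(pPartSet L A), pPartStructure L A⟩ ⟨↥(pPartSet L B), pPartStructure L B⟩
    hA.2.2 hB.2.2 (pRestrict L A B f)
    (@pPartStructure (L.sum L') _ A SA)
    (struct_ext fun n R t => Iff.rfl) hA'.2.2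
  let iPA : (L.sum L').Structure ↥(pPartSet L A) := @pPartStructure (L.sum L') _ A SA
  change (L.sum L').Structure ↥(pPartSet L B) at S₀
  let g : @FirstOrder.Language.Embedding (L.sum L') ↥(pPartSet L A) ↥(pPartSet L B) iPA S₀ := g₀
  have hg : ∀ a : ↥(pPartSet L A), (g a).1 = f a.1 := fun a => congrArg Subtype.val (hg₀ a)
  let W : ∀ n : ℕ, L'.Relations n → (Fin n → B) → Prop := fun n R t =>
    ∃ s : Fin n → A, (∀ i, f (s i) = t i) ∧
      @Structure.RelMap (LM (L.sum L')) A SA n (Sum.inr (Sum.inl (Sum.inr R))) s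
  have key : @pPartStructure (L.sum L') _ B (bigExp L L' B S₀ W) = S₀ := by
    apply struct_ext
    rintro n (R | R) t
    · have h : @Structure.RelMap L _ (@LHom.reduct _ _
          (LHom.sumInl : L →ᴸ L.sum L') _ S₀) n R t ↔
          @Structure.RelMap L _ (pPartStructure L B) n R t := by
        rw [hS₀]
      exact h.symm
    · constructor
      · rintro (⟨_, h⟩ | ⟨h, _⟩)
        · exact h
        · exact absurd (fun i => (t i).2) h
      · intro h
        exact Or.inl ⟨fun i => (t i).2, h⟩
  refine ⟨bigExp L L' B S₀ W, ?_, ⟨hB.1, ?_, ?_⟩, ?_⟩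
  · apply struct_ext
    rintro n (R | R | R) t <;> exact Iff.rfl
  · exact hB.2.1
  · have : (⟨↥(pPartSet L B), @pPartStructure (L.sum L') _ B (bigExp L L' B S₀ W)⟩ :
        Bundled.{0} (L.sum L').Structure) ∈ FirstOrder.Language.age (L.sum L') ℕ := by
      rw [key]; exact hS₀K
    exact this
  · refine ⟨@FirstOrder.Language.Embedding.mk (LM (L.sum L')) A B SA (bigExp L L' B S₀ W)
      f.toEmbedding (fun F _ => isEmptyElim F) ?_, fun a => rfl⟩
    rintro n (R | (R | R) | R) t
    · exact f.map_rel (Sum.inl R) t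
    · exact f.map_rel (Sum.inr (Sum.inl R)) t
    · have hP : ∀ i, f (t i) ∈ pPartSet L B ↔ t i ∈ pPartSet L A :=
        fun i => mem_pPart_iff L A B f (t i)
      by_cases hall : ∀ i, t i ∈ pPartSet L A
      · have h1 := g.map_rel (Sum.inr R : (L.sum L').Relations n) (fun i => ⟨t i, hall i⟩)
        have e : (⇑g ∘ fun i => (⟨t i, hall i⟩ : pPartSet L A)) =
            fun i => (⟨f (t i), (hP i).2 (hall i)⟩ : pPartSet L B) := by
          funext i
          exact Subtype.ext (hg _)
        rw [e] at h1
        constructor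
        · rintro (⟨_, h⟩ | ⟨h, _⟩)
          · exact h1.1 h
          · exact absurd (fun i => (hP i).2 (hall i)) h
        · intro h
          exact Or.inl ⟨fun i => (hP i).2 (hall i), h1.2 h⟩
      · constructor
        · rintro (⟨h, _⟩ | ⟨_, s, hs, h⟩)
          · exact absurd (fun i => (hP i).1 (h i)) hall
          · have : s = t := funext fun i => f.injective (hs i)
            rw [← this]; exact h
        · intro h
          exact Or.inr ⟨fun h' => hall fun i => (hP i).1 (h' i), t, fun i => rfl, h⟩
    · exact f.map_rel (Sum.inr (Sum.inr R)) t


end Paper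
end
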